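/- arXiv:1410.3260 — 6 statements merged into one kernel-verified Lean document; each statement's English description precedes it below -/
import Mathlib

section
/- For all natural numbers p and q there exists a number C = C(p,q) with the following property: whenever a graph G contains 2C pairwise disjoint vertex subsets V_1, V_2, …, V_C and W_1, W_2, …, W_C, each of size p, such that for every pair of indices i, j there is at least one edge of G with one endpoint in V_i and the other endpoint in W_j, then G contains the complete bipartite graph K_{q,q} as a (not necessarily induced) subgraph. -/
/-!
Labelling the elements of each `V i` and each `W j` by `Fin p`, an edge between `V i` and `W j`
has a type in `Fin p × Fin p`, the pair of labels of its ends. Choosing one edge for each pair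
`(i, j)` therefore colours the edges of `K_{C,C}` with `p ^ 2` colours. By the bipartite Ramsey
theorem (`exists_mono_biclique`) there are `q` rows and `q` columns on which the colour is a
constant `(x, y)`; the vertices labelled `x` in those `V i` and `y` in those `W j` span a `K_{q,q}`,
those on the same side being distinct because the sets are pairwise disjoint, and those on opposite
sides because they are adjacent.
-/

open SimpleGraph

/-- `H` is contained in `G` as a (not necessarily induced) subgraph:
there is an injective graph homomorphism from `H` to `G`. -/
def ContainsSub {α β : Type*} (H : SimpleGraph α) (G : SimpleGraph β) : Prop :=
  ∃ f : H →g G, Function.Injective f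

/-- `H` is contained in `G` as an induced subgraph: there is a graph embedding. -/
def ContainsInd {α β : Type*} (H : SimpleGraph α) (G : SimpleGraph β) : Prop :=
  Nonempty (H ↪g G)

/-- The H-graph with body `b_1 … b_m` (the vertices `Sum.inl i`) and four wings
(`Sum.inr w`): wings `0, 1` (left) are adjacent to `b_1`, wings `2, 3` (right) are
adjacent to `b_m`; the two left wings are adjacent iff `lt`, and the two right
wings are adjacent iff `rt`. -/
def hGraph (m : ℕ) (lt rt : Prop) : SimpleGraph (Fin m ⊕ Fin 4) :=
  SimpleGraph.fromRel (fun x y =>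
    match x, y with
    | Sum.inl i, Sum.inl j => (i : ℕ) + 1 = (j : ℕ)
    | Sum.inr w, Sum.inl i => ((w : ℕ) < 2 ∧ (i : ℕ) = 0) ∨ (2 ≤ (w : ℕ) ∧ (i : ℕ) + 1 = m)
    | Sum.inr w, Sum.inr w' =>
        (lt ∧ (w : ℕ) = 0 ∧ (w' : ℕ) = 1) ∨ (rt ∧ (w : ℕ) = 2 ∧ (w' : ℕ) = 3)
    | _, _ => False)

/-- The three kinds of H-graphs with body of length `m`:
`t = 0` is the plain H-graph, `t = 1` the semi-tight one (the two right wings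
adjacent), `t = 2` the tight one (both pairs of wings adjacent). -/
def hGraphT (m : ℕ) (t : Fin 3) : SimpleGraph (Fin m ⊕ Fin 4) :=
  hGraph m ((t : ℕ) = 2) ((t : ℕ) ≠ 0)

/-- `G` contains a canonical graph of order at least `s` as an induced subgraph:
either a hole `C_n` with `n ≥ 4`, `n ≥ s`, or an H-graph (plain, semi-tight or
tight) with body of length `m ≥ 1`, `m ≥ s`. -/
def ContainsCanonical {β : Type*} (G : SimpleGraph β) (s : ℕ) : Prop :=
  (∃ n : ℕ, 4 ≤ n ∧ s ≤ n ∧ ContainsInd (cycleGraph n) G) ∨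
  (∃ m : ℕ, 1 ≤ m ∧ s ≤ m ∧ ∃ t : Fin 3, ContainsInd (hGraphT m t) G)

/-- The rake with base the chordless path on `Fin n` and `k` teeth (`Sum.inr t`),
tooth `t` being adjacent exactly to its root `r t` on the base. -/
def rakeGraph (n k : ℕ) (r : Fin k → Fin n) : SimpleGraph (Fin n ⊕ Fin k) :=
  SimpleGraph.fromRel (fun x y =>
    match x, y with
    | Sum.inl i, Sum.inl j => (i : ℕ) + 1 = (j : ℕ)
    | Sum.inr t, Sum.inl i => r t = i
    | _, _ => False)

/-- `G` contains a `k`-rake as a (not necessarily induced) subgraph. -/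
def ContainsRake {β : Type*} (G : SimpleGraph β) (k : ℕ) : Prop :=
  ∃ (n : ℕ) (r : Fin k → Fin n), Function.Injective r ∧ ContainsSub (rakeGraph n k r) G

/-- `G` contains an `ℓ`-dense `k`-rake as a subgraph: every `ℓ` consecutive
vertices of the base include at least one root. -/
def ContainsDenseRake {β : Type*} (G : SimpleGraph β) (k ℓ : ℕ) : Prop :=
  ∃ (n : ℕ) (r : Fin k → Fin n), Function.Injective r ∧
    (∀ i : ℕ, i + ℓ ≤ n → ∃ t : Fin k, i ≤ (r t : ℕ) ∧ (r t : ℕ) < i + ℓ) ∧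
    ContainsSub (rakeGraph n k r) G

/-- The pigeonhole principle, with the large fibre given by an injective enumeration. -/
lemma exists_mono_enum {α κ : Type*} [Fintype α] [Fintype κ] [Nonempty κ] (f : α → κ) (q : ℕ)
    (h : Fintype.card κ * q ≤ Fintype.card α) :
    ∃ (y : κ) (s : Fin q → α), Function.Injective s ∧ ∀ i, f (s i) = y := by
  classical
  obtain ⟨y, hy⟩ := Fintype.exists_le_card_fiber_of_mul_le_card f h
  obtain ⟨t, ht, hc⟩ := Finset.exists_subset_card_eq hy
  refine ⟨y, fun i => ((t.equivFinOfCardEq hc).symm i : α), fun i j hij => ?_, fun i => ?_⟩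
  · exact (t.equivFinOfCardEq hc).symm.injective (Subtype.ext hij)
  · exact (Finset.mem_filter.mp (ht ((t.equivFinOfCardEq hc).symm i).2)).2

/-- Bipartite Ramsey theorem. With `N = |κ| q`, among `|κ| ^ N * q` columns some `q` agree on the
first `N` rows, and then some `q` of these rows carry the same colour. -/
lemma exists_mono_biclique (κ : Type*) [Fintype κ] (q : ℕ) :
    ∃ C : ℕ, ∀ c : Fin C → Fin C → κ, ∃ (k : κ) (r s : Fin q → Fin C),
      Function.Injective r ∧ Function.Injective s ∧ ∀ i j, c (r i) (s j) = k := by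
  classical
  let N := Fintype.card κ * q
  -- The summand `1` makes `κ` nonempty as soon as a colouring exists.
  refine ⟨N + Fintype.card κ ^ N * q + 1, fun c => ?_⟩
  have : Nonempty κ := ⟨c 0 0⟩
  have hN : N ≤ N + Fintype.card κ ^ N * q + 1 := by omega
  obtain ⟨g, s, hs, hg⟩ := exists_mono_enum
    (fun j => fun i : Fin N => c (Fin.castLE hN i) j) q
    (by rw [Fintype.card_fun, Fintype.card_fin, Fintype.card_fin]; omega)
  obtain ⟨k, r, hr, hk⟩ := exists_mono_enum g q (by rw [Fintype.card_fin])
  refine ⟨k, fun i => Fin.castLE hN (r i), s, (Fin.castLE_injective hN).comp hr, hs,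
    fun i j => ?_⟩
  rw [← hk i, ← hg j]

/-- For all `p q` there is `C = C(p,q)` such that whenever a graph `G` contains
pairwise disjoint sets `V_1, …, V_C, W_1, …, W_C`, each of size `p`, with at least
one edge between every `V_i` and every `W_j`, then `G` contains `K_{q,q}` as a
subgraph. -/
theorem stmt_0 (p q : ℕ) : ∃ C : ℕ, ∀ (β : Type) [Fintype β] (G : SimpleGraph β)
    (V W : Fin C → Finset β),
    (∀ i, (V i).card = p) →
    (∀ i, (W i).card = p) →
    (∀ i j, i ≠ j → Disjoint (V i) (V j)) →
    (∀ i j, i ≠ j → Disjoint (W i) (W j)) →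
    (∀ i j, Disjoint (V i) (W j)) →
    (∀ i j, ∃ a ∈ V i, ∃ b ∈ W j, G.Adj a b) →
    ContainsSub (completeBipartiteGraph (Fin q) (Fin q)) G := by
  obtain ⟨C, hC⟩ := exists_mono_biclique (Fin p × Fin p) q
  refine ⟨C, fun β _ G V W hV hW hVV hWW hVW hE => ?_⟩
  choose a ha b hb hab using hE
  let e := fun i => (V i).equivFinOfCardEq (hV i)
  let f := fun j => (W j).equivFinOfCardEq (hW j)
  obtain ⟨⟨x, y⟩, r, s, hr, hs, hc⟩ :=
    hC fun i j => (e i ⟨a i j, ha i j⟩, f j ⟨b i j, hb i j⟩)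
  have hadj : ∀ i j, G.Adj ((e (r i)).symm x : β) ((f (s j)).symm y : β) := by
    intro i j
    obtain ⟨h1, h2⟩ := Prod.mk.inj (hc i j)
    rw [← h1, ← h2, Equiv.symm_apply_apply, Equiv.symm_apply_apply]
    exact hab _ _
  refine ⟨⟨Sum.elim (fun i => ((e (r i)).symm x : β)) (fun j => ((f (s j)).symm y : β)), ?_⟩, ?_⟩
  · rintro (i | i) (j | j) h
    · simp at h
    · exact hadj i j
    · exact (hadj j i).symm
    · simp at h
  · refine Function.Injective.sumElim (fun i j h => hr ?_) (fun i j h => hs ?_) fun i j => ?_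
    · by_contra hne
      exact Finset.disjoint_left.mp (hVV _ _ hne) ((e (r i)).symm x).2
        (by rw [show ((e (r i)).symm x : β) = _ from h]; exact ((e (r j)).symm x).2)
    · by_contra hne
      exact Finset.disjoint_left.mp (hWW _ _ hne) ((f (s i)).symm y).2
        (by rw [show ((f (s i)).symm y : β) = _ from h]; exact ((f (s j)).symm y).2)
    · exact (hadj i j).ne
end

section
/- For every s and q there exists a number Y = Y(s,q) such that every graph containing a path on at least Y vertices as a (not necessarily induced) subgraph contains either the path P_s as an induced subgraph or the complete bipartite graph K_{⌊q/2⌋, ⌈q/2⌉} as a (not necessarily induced) subgraph. -/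
/-!
A graph with arbitrarily long paths contains a long induced path or a large biclique.

*Compactness.* If the claim failed for every `Y`, the counterexamples would carry longer and longer
paths; their limit along a nonprincipal ultrafilter on `ℕ` is a graph on `ℕ` in which `i` and
`i + 1` are always adjacent, and every finite configuration of the limit already occurs in one of
the counterexamples. So it suffices to treat a graph on `ℕ` with `i ~ i + 1` for all `i`
(`exists_biclique_of_ray`).

*The infinite graph.* Suppose there is no induced `P_s`. A shortest path is induced, so for `i ≤ j`
there is a path `P(i, j)` from `i` to `j` inside the interval `[i, j]` with at most `s` steps
(`exists_short_path`). By Ramsey's theorem for quadruples, here in an ultrafilter form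
(`exists_homogeneous`), whether the `a`-th vertex of `P(i, j)` and the `b`-th vertex of `P(k, l)`
are adjacent may be assumed independent of `i < j < k < l`. If they are adjacent for some `a, b`,
then paths over disjoint intervals give a biclique of any size. Otherwise `P(i, j)` and `P(k, l)`
are anticomplete, and along `e 0 < e 1 < ⋯ < e s` the union of the paths `P(e p, e (p + 1))` is a
connected graph whose edges stay within one path or join two consecutive ones. A shortest path in
this union from `e 0` to `e s` visits every `P(e p, e (p + 1))`, hence is an induced path on at
least `s` vertices, a contradiction.
-/


open SimpleGraph

open Filter

/-! ### Shortest paths are induced -/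

/-- A shortest walk is an induced path. -/
lemma containsInd_of_dist {V : Type*} (G : SimpleGraph V) {u v : V} (h : G.Reachable u v) (s : ℕ)
    (hs : s ≤ G.dist u v + 1) : ContainsInd (pathGraph s) G := by
  obtain ⟨p, hp⟩ := h.exists_walk_length_eq_dist
  have key : ∀ i j : ℕ, i ≤ j → j ≤ p.length → G.dist (p.getVert i) (p.getVert j) = j - i := by
    intro i j hij hj
    apply le_antisymm
    · have := dist_le (((p.drop i).take (j - i)).copy rfl (by
        rw [Walk.drop_getVert]; congr 1; omega) : G.Walk (p.getVert i) (p.getVert j))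
      refine this.trans ?_
      simp
    · obtain ⟨w, hw⟩ := (((p.drop i).take (j - i)).copy rfl (by
        rw [Walk.drop_getVert]; congr 1; omega) :
          G.Walk (p.getVert i) (p.getVert j)).reachable.exists_walk_length_eq_dist
      have := dist_le (((p.take i).append w).append (p.drop j))
      simp only [Walk.length_append, Walk.take_length, Walk.drop_length] at this
      omega
  have hlt : ∀ i : Fin s, (i : ℕ) ≤ p.length := fun i => by have := i.2; omega
  have hinj : Function.Injective (fun i : Fin s => p.getVert i) := by
    intro i j hij
    simp only at hij
    rcases le_total (i : ℕ) j with h | h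
    · have := key i j h (hlt j)
      rw [hij, SimpleGraph.dist_self] at this
      ext; omega
    · have := key j i h (hlt i)
      rw [hij, SimpleGraph.dist_self] at this
      ext; omega
  refine ⟨⟨⟨fun i => p.getVert i, hinj⟩, ?_⟩⟩
  intro i j
  simp only [Function.Embedding.coeFn_mk, pathGraph_adj]
  rcases le_total (i : ℕ) j with h | h
  · rw [← dist_eq_one_iff_adj, key i j h (hlt j)]; omega
  · rw [adj_comm, ← dist_eq_one_iff_adj, key j i h (hlt i)]; omega

lemma containsInd_of_induce {V : Type*} {G : SimpleGraph V} {S : Set V} {s : ℕ}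
    (h : ContainsInd (pathGraph s) (G.induce S)) : ContainsInd (pathGraph s) G :=
  h.map fun f => (Embedding.induce S).comp f

/-- The vertex sequence may be constant from some point on, so it encodes a path with at most `s`
steps. -/
lemma exists_short_path (G : SimpleGraph ℕ) (hG : ∀ i, G.Adj i (i + 1)) (s : ℕ)
    (hs : ¬ ContainsInd (pathGraph s) G) (i j : ℕ) (hij : i ≤ j) :
    ∃ y : ℕ → ℕ, y 0 = i ∧ y s = j ∧ (∀ a, y a = y (a + 1) ∨ G.Adj (y a) (y (a + 1))) ∧
      ∀ a, i ≤ y a ∧ y a ≤ j := by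
  have hreach : ∀ d (hd : i + d ≤ j), (G.induce (Set.Icc i j)).Reachable
      ⟨i, le_rfl, hij⟩ ⟨i + d, by omega, hd⟩ := by
    intro d
    induction d with
    | zero => intro _; exact Reachable.refl _
    | succ d ih =>
      intro hd
      refine (ih (by omega)).trans (Adj.reachable ?_)
      exact hG (i + d)
  have hr : (G.induce (Set.Icc i j)).Reachable ⟨i, le_rfl, hij⟩ ⟨j, hij, le_rfl⟩ := by
    have := hreach (j - i) (by omega)
    have hj : i + (j - i) = j := by omega
    simpa only [hj] using this
  obtain ⟨p, hp⟩ := hr.exists_walk_length_eq_dist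
  have hlen : p.length ≤ s := by
    by_contra hc
    exact hs (containsInd_of_induce (containsInd_of_dist _ hr s (by omega)))
  refine ⟨fun a => (p.getVert a : ℕ), by simp, ?_, ?_, ?_⟩
  · simp [p.getVert_of_length_le hlen]
  · intro a
    rcases lt_or_ge a p.length with ha | ha
    · right
      simpa using p.adj_getVert_succ ha
    · left
      simp only
      rw [p.getVert_of_length_le ha, p.getVert_of_length_le (by omega)]
  · intro a
    exact (p.getVert a).2

/-! ### Ramsey's theorem for quadruples -/

/-- Ramsey's theorem for quadruples in ultrafilter form: a relation that holds for
ultrafilter-almost all `i`, `j`, `k`, `l` holds on all increasing quadruples of some finite set of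
any prescribed size. -/
lemma exists_homogeneous (F : ℕ → ℕ → ℕ → ℕ → Prop)
    (hF : ∀ᶠ i in hyperfilter ℕ, ∀ᶠ j in hyperfilter ℕ, ∀ᶠ k in hyperfilter ℕ,
      ∀ᶠ l in hyperfilter ℕ, F i j k l) (n : ℕ) :
    ∃ e : ℕ → ℕ, (∀ a b, a < b → b < n → e a < e b) ∧
      ∀ a b c d, a < b → b < c → c < d → d < n → F (e a) (e b) (e c) (e d) := by
  have key : ∀ n : ℕ, ∃ S : Finset ℕ, S.card = n ∧
      (∀ i ∈ S, ∀ᶠ j in hyperfilter ℕ, ∀ᶠ k in hyperfilter ℕ, ∀ᶠ l in hyperfilter ℕ, F i j k l) ∧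
      (∀ i ∈ S, ∀ j ∈ S, i < j →
        ∀ᶠ k in hyperfilter ℕ, ∀ᶠ l in hyperfilter ℕ, F i j k l) ∧
      (∀ i ∈ S, ∀ j ∈ S, ∀ k ∈ S, i < j → j < k → ∀ᶠ l in hyperfilter ℕ, F i j k l) ∧
      (∀ i ∈ S, ∀ j ∈ S, ∀ k ∈ S, ∀ l ∈ S, i < j → j < k → k < l → F i j k l) := by
    intro n
    induction n with
    | zero => exact ⟨∅, by simp⟩
    | succ n ih =>
      obtain ⟨S, hc, h1, h2, h3, h4⟩ := ih
      have g0 : ∀ᶠ y in hyperfilter ℕ, ∀ i ∈ S, i < y :=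
        (eventually_all_finset S).2 fun i _ =>
          (Nat.hyperfilter_le_atTop) (eventually_gt_atTop i)
      have g2 : ∀ᶠ y in hyperfilter ℕ, ∀ i ∈ S,
          ∀ᶠ k in hyperfilter ℕ, ∀ᶠ l in hyperfilter ℕ, F i y k l :=
        (eventually_all_finset S).2 h1
      have g3 : ∀ᶠ y in hyperfilter ℕ, ∀ i ∈ S, ∀ j ∈ S, i < j →
          ∀ᶠ l in hyperfilter ℕ, F i j y l :=
        (eventually_all_finset S).2 fun i hi => (eventually_all_finset S).2 fun j hj =>
          eventually_imp_distrib_left.2 (h2 i hi j hj)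
      have g4 : ∀ᶠ y in hyperfilter ℕ, ∀ i ∈ S, ∀ j ∈ S, ∀ k ∈ S, i < j → j < k →
          F i j k y :=
        (eventually_all_finset S).2 fun i hi => (eventually_all_finset S).2 fun j hj =>
          (eventually_all_finset S).2 fun k hk => eventually_imp_distrib_left.2 fun hij =>
            eventually_imp_distrib_left.2 (h3 i hi j hj k hk hij)
      obtain ⟨y, k0, k1, k2, k3, k4⟩ := (g0.and (hF.and (g2.and (g3.and g4)))).exists
      have hy : y ∉ S := fun h => lt_irrefl _ (k0 y h)
      -- in an increasing tuple of `insert y S`, only the last entry can be `y`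
      have hlast : ∀ i ∈ insert y S, ∀ j ∈ insert y S, i < j → i ∈ S := by
        intro i hi j hj hij
        rcases Finset.mem_insert.1 hi with rfl | hi
        · rcases Finset.mem_insert.1 hj with rfl | hj
          · omega
          · have := k0 j hj; omega
        · exact hi
      refine ⟨insert y S, by simp [hy, hc], ?_, ?_, ?_, ?_⟩
      · intro i hi
        rcases Finset.mem_insert.1 hi with rfl | hi
        · exact k1
        · exact h1 i hi
      · intro i hi j hj hij
        have hi' := hlast i hi j hj hij
        rcases Finset.mem_insert.1 hj with rfl | hj
        · exact k2 i hi'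
        · exact h2 i hi' j hj hij
      · intro i hi j hj k hk hij hjk
        have hi' := hlast i hi j hj hij
        have hj' := hlast j hj k hk hjk
        rcases Finset.mem_insert.1 hk with rfl | hk
        · exact k3 i hi' j hj' hij
        · exact h3 i hi' j hj' k hk hij hjk
      · intro i hi j hj k hk l hl hij hjk hkl
        have hi' := hlast i hi j hj hij
        have hj' := hlast j hj k hk hjk
        have hk' := hlast k hk l hl hkl
        rcases Finset.mem_insert.1 hl with rfl | hl
        · exact k4 i hi' j hj' k hk' hij hjk
        · exact h4 i hi' j hj' k hk' l hl hij hjk hkl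
  obtain ⟨S, hc, -, -, -, h4⟩ := key n
  have he : ∀ a (h : a < n), (fun a => if h : a < n then S.orderEmbOfFin hc ⟨a, h⟩ else 0) a =
      S.orderEmbOfFin hc ⟨a, h⟩ := fun a h => dif_pos h
  refine ⟨fun a => if h : a < n then S.orderEmbOfFin hc ⟨a, h⟩ else 0, ?_, ?_⟩
  · intro a b hab hb
    rw [he a (by omega), he b hb]
    exact (S.orderEmbOfFin hc).strictMono hab
  · intro a b c d hab hbc hcd hd
    rw [he a (by omega), he b (by omega), he c (by omega), he d hd]
    apply h4 <;> first | exact S.orderEmbOfFin_mem hc _ | exact (S.orderEmbOfFin hc).strictMono ‹_›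

/-! ### The infinite graph -/

/-- The infinite version: a graph on `ℕ` with a spanning one-way infinite path contains an induced
`P_s` or bicliques of every size. -/
lemma exists_biclique_of_ray (G : SimpleGraph ℕ) (hG : ∀ i, G.Adj i (i + 1)) (s : ℕ)
    (hs : ¬ ContainsInd (pathGraph s) G) (t : ℕ) :
    ∃ f g : Fin t → ℕ, Function.Injective f ∧ Function.Injective g ∧
      ∀ i j, G.Adj (f i) (g j) := by
  have hx : ∀ i j, ∃ y : ℕ → ℕ, i ≤ j → y 0 = i ∧ y s = j ∧
      (∀ a, y a = y (a + 1) ∨ G.Adj (y a) (y (a + 1))) ∧ ∀ a, i ≤ y a ∧ y a ≤ j := by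
    intro i j
    by_cases h : i ≤ j
    · obtain ⟨y, hy⟩ := exists_short_path G hG s hs i j h
      exact ⟨y, fun _ => hy⟩
    · exact ⟨id, fun h' => absurd h' h⟩
  choose x hx using hx
  by_cases hc : ∃ a b : Fin (s + 1), ∀ᶠ i in hyperfilter ℕ, ∀ᶠ j in hyperfilter ℕ,
      ∀ᶠ k in hyperfilter ℕ, ∀ᶠ l in hyperfilter ℕ, G.Adj (x i j a) (x k l b)
  · obtain ⟨a, b, hab⟩ := hc
    obtain ⟨e, hmono, hF⟩ := exists_homogeneous _ hab (4 * t)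
    -- vertices taken from disjoint intervals are distinct
    have hinj : ∀ (c o : ℕ), o ≤ 2 * t →
        Function.Injective (fun p : Fin t => x (e (o + 2 * p)) (e (o + 2 * p + 1)) c) := by
      intro c o ho
      have hlt : ∀ p q : Fin t, p < q → x (e (o + 2 * p)) (e (o + 2 * p + 1)) c <
          x (e (o + 2 * q)) (e (o + 2 * q + 1)) c := by
        intro p q hpq
        have hpq' : (p : ℕ) < q := hpq
        have hp := p.2
        have hq := q.2
        have h1 := (hx _ _ (hmono (o + 2 * p) (o + 2 * p + 1) (by omega) (by omega)).le).2.2.2 c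
        have h2 := (hx _ _ (hmono (o + 2 * q) (o + 2 * q + 1) (by omega) (by omega)).le).2.2.2 c
        have h3 := hmono (o + 2 * p + 1) (o + 2 * q) (by omega) (by omega)
        omega
      exact StrictMono.injective (fun p q h => hlt p q h)
    refine ⟨_, _, hinj a 0 (by omega), hinj b (2 * t) le_rfl, ?_⟩
    intro p q
    have hp := p.2
    have hq := q.2
    exact hF _ _ _ _ (by omega) (by omega) (by omega) (by omega)
  · exfalso
    simp only [not_exists, ← Ultrafilter.eventually_not] at hc
    have hanti : ∀ᶠ i in hyperfilter ℕ, ∀ᶠ j in hyperfilter ℕ,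
        ∀ᶠ k in hyperfilter ℕ, ∀ᶠ l in hyperfilter ℕ,
        ∀ a b : Fin (s + 1), ¬ G.Adj (x i j a) (x k l b) := by
      simp only [eventually_all]
      exact hc
    obtain ⟨e, hmono, hF⟩ := exists_homogeneous _ hanti (s + 1)
    have hs0 : 0 < s := by
      rcases Nat.eq_zero_or_pos s with rfl | h
      · exact absurd ⟨⟨⟨Fin.elim0, fun i => i.elim0⟩, fun {i} => i.elim0⟩⟩ hs
      · exact h
    have hX : ∀ p, p < s → _ := fun p hp =>
      hx (e p) (e (p + 1)) (hmono p (p + 1) (by omega) (by omega)).le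
    let S : Set ℕ := {z | ∃ p < s, ∃ a ≤ s, x (e p) (e (p + 1)) a = z}
    have hmem : ∀ p, p < s → ∀ a, a ≤ s → x (e p) (e (p + 1)) a ∈ S :=
      fun p hp a ha => ⟨p, hp, a, ha, rfl⟩
    have h0 : e 0 ∈ S := ⟨0, hs0, 0, by omega, (hX 0 hs0).1⟩
    have hreach : ∀ p (hp : p < s) a (ha : a ≤ s), (G.induce S).Reachable ⟨e 0, h0⟩
        ⟨x (e p) (e (p + 1)) a, hmem p hp a ha⟩ := by
      intro p
      induction p with
      | zero =>
        intro hp a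
        induction a with
        | zero =>
          intro ha
          simp only [(hX 0 hs0).1]
          exact Reachable.refl _
        | succ a ih =>
          intro ha
          refine (ih (by omega)).trans ?_
          rcases (hX 0 hp).2.2.1 a with h | h
          · simp only [h]; exact Reachable.refl _
          · exact Adj.reachable (by simpa using h)
      | succ p ihp =>
        intro hp a
        induction a with
        | zero =>
          intro ha
          have := ihp (by omega) s le_rfl
          simp only [(hX p (by omega)).2.1] at this
          simpa only [(hX (p + 1) hp).1] using this
        | succ a ih =>
          intro ha
          refine (ih (by omega)).trans ?_
          rcases (hX (p + 1) hp).2.2.1 a with h | h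
          · simp only [h]; exact Reachable.refl _
          · exact Adj.reachable (by simpa using h)
    have hr := hreach (s - 1) (by omega) s le_rfl
    -- a walk with `d` steps starting at `e 0` cannot get past the path number `d`
    have hlev : ∀ (d : ℕ) (z : S) (w : (G.induce S).Walk ⟨e 0, h0⟩ z), w.length = d →
        ∃ p < s, p ≤ d ∧ ∃ a ≤ s, x (e p) (e (p + 1)) a = z := by
      intro d
      induction d with
      | zero =>
        intro z w hw
        have := Walk.eq_of_length_eq_zero hw
        subst this
        exact ⟨0, hs0, le_rfl, 0, by omega, (hX 0 hs0).1⟩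
      | succ d ih =>
        intro z w hw
        obtain ⟨p, hp, hpd, a, ha, hpa⟩ := ih (w.getVert d) (w.take d) (by simp; omega)
        have hadj := w.adj_getVert_succ (i := d) (by omega)
        rw [w.getVert_of_length_le (i := d + 1) (by omega)] at hadj
        obtain ⟨q, hq, b, hb, hqb⟩ := z.2
        refine ⟨q, hq, ?_, b, hb, hqb⟩
        by_contra hcon
        refine hF p (p + 1) q (q + 1) (by omega) (by omega) (by omega) (by omega)
          ⟨a, by omega⟩ ⟨b, by omega⟩ ?_
        simp only [hpa, hqb]
        simpa using hadj
    obtain ⟨w, hw⟩ := hr.exists_walk_length_eq_dist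
    obtain ⟨p, hp, hpd, a, ha, hpa⟩ := hlev _ _ w rfl
    simp only [(hX (s - 1) (by omega)).2.1] at hpa
    have hle := ((hX p hp).2.2.2 a).2
    have hps : s ≤ p + 1 := by
      by_contra hcon
      have := hmono (p + 1) (s - 1 + 1) (by omega) (by omega)
      omega
    exact hs (containsInd_of_induce (containsInd_of_dist _ hr s (by omega)))

/-! ### Compactness -/

/-- For every `s` and `q` there is `Y = Y(s,q)` such that every graph containing a
path on at least `Y` vertices as a subgraph contains either `P_s` as an induced
subgraph or `K_{⌊q/2⌋, ⌈q/2⌉}` as a subgraph. -/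
theorem stmt_1 (s q : ℕ) : ∃ Y : ℕ, ∀ (β : Type) [Fintype β] (G : SimpleGraph β),
    (∃ n : ℕ, Y ≤ n ∧ ContainsSub (pathGraph n) G) →
    ContainsInd (pathGraph s) G ∨
      ContainsSub (completeBipartiteGraph (Fin (q / 2)) (Fin ((q + 1) / 2))) G := by
  by_contra hcon
  push Not at hcon
  choose β _ G hpath hind hsub using hcon
  choose n hn f hf using hpath
  -- the limit of the counterexamples along the ultrafilter
  let L : SimpleGraph ℕ :=
    { Adj := fun i j => ∀ᶠ Y in hyperfilter ℕ, ∃ (hi : i < n Y) (hj : j < n Y),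
        (G Y).Adj (f Y ⟨i, hi⟩) (f Y ⟨j, hj⟩)
      symm := ⟨fun i j h => h.mono fun Y ⟨hi, hj, h⟩ => ⟨hj, hi, h.symm⟩⟩
      loopless := ⟨fun i h => by
        obtain ⟨Y, hi, hj, h⟩ := h.exists
        exact (G Y).irrefl h⟩ }
  have hlarge : ∀ i, ∀ᶠ Y in hyperfilter ℕ, i < n Y := fun i =>
    Nat.hyperfilter_le_atTop ((eventually_gt_atTop i).mono fun Y hY => lt_of_lt_of_le hY (hn Y))
  have hL : ∀ i, L.Adj i (i + 1) := by
    intro i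
    refine (hlarge (i + 1)).mono fun Y hY => ⟨by omega, hY, (f Y).map_adj ?_⟩
    simp [pathGraph_adj]
  by_cases hs : ContainsInd (pathGraph s) L
  · obtain ⟨g⟩ := hs
    have h1 : ∀ᶠ Y in hyperfilter ℕ, ∀ a, g a < n Y := eventually_all.2 fun a => hlarge _
    have h2 : ∀ᶠ Y in hyperfilter ℕ, ∀ a b, (pathGraph s).Adj a b ↔
        ∃ (hi : g a < n Y) (hj : g b < n Y), (G Y).Adj (f Y ⟨g a, hi⟩) (f Y ⟨g b, hj⟩) := by
      refine eventually_all.2 fun a => eventually_all.2 fun b => ?_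
      by_cases hab : (pathGraph s).Adj a b
      · exact (show L.Adj (g a) (g b) from g.map_adj_iff.2 hab).mono fun Y hY =>
          iff_of_true hab hY
      · have : ¬ L.Adj (g a) (g b) := fun h => hab (g.map_adj_iff.1 h)
        exact (Ultrafilter.eventually_not.2 this).mono fun Y hY => iff_of_false hab hY
    obtain ⟨Y, k1, k2⟩ := (h1.and h2).exists
    refine hind Y ⟨⟨⟨fun a => f Y ⟨g a, k1 a⟩, ?_⟩, ?_⟩⟩
    · intro a b hab
      exact g.injective (Fin.mk.inj_iff.1 (hf Y hab))
    · intro a b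
      rw [k2 a b]
      exact ⟨fun h => ⟨k1 a, k1 b, h⟩, fun ⟨_, _, h⟩ => h⟩
  · obtain ⟨u, v, hu, hv, huv⟩ := exists_biclique_of_ray L hL s hs q
    have h1 : ∀ᶠ Y in hyperfilter ℕ, ∀ a b, ∃ (hi : u a < n Y) (hj : v b < n Y),
        (G Y).Adj (f Y ⟨u a, hi⟩) (f Y ⟨v b, hj⟩) :=
      eventually_all.2 fun a => eventually_all.2 fun b => huv a b
    have h2 : ∀ᶠ Y in hyperfilter ℕ, ∀ a, u a < n Y := eventually_all.2 fun a => hlarge _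
    have h3 : ∀ᶠ Y in hyperfilter ℕ, ∀ a, v a < n Y := eventually_all.2 fun a => hlarge _
    obtain ⟨Y, k1, k2, k3⟩ := (h1.and (h2.and h3)).exists
    have hadj : ∀ a b, (G Y).Adj (f Y ⟨u a, k2 a⟩) (f Y ⟨v b, k3 b⟩) := fun a b => by
      obtain ⟨_, _, h⟩ := k1 a b
      exact h
    have hq1 : q / 2 ≤ q := by omega
    have hq2 : (q + 1) / 2 ≤ q := by omega
    refine hsub Y ⟨⟨Sum.elim (fun a => f Y ⟨u (Fin.castLE hq1 a), k2 _⟩)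
      (fun b => f Y ⟨v (Fin.castLE hq2 b), k3 _⟩), ?_⟩, ?_⟩
    · rintro (a | a) (b | b) h
      · simp at h
      · exact hadj _ _
      · exact (hadj _ _).symm
      · simp at h
    · refine Function.Injective.sumElim ?_ ?_ ?_
      · intro a b hab
        exact Fin.castLE_injective hq1 (hu (Fin.mk.inj_iff.1 (hf Y hab)))
      · intro a b hab
        exact Fin.castLE_injective hq2 (hv (Fin.mk.inj_iff.1 (hf Y hab)))
      · intro a b
        exact (hadj _ _).ne
end

section
/- For every s, t, and q there exists a number Z = Z(s,t,q) such that every graph containing a path on at least Z vertices as a (not necessarily induced) subgraph contains either P_s or K_t or K_{q,q} as an induced subgraph. -/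
/-!
The theorem is proved by applying Ramsey's theorem for 4-tuples to a long path `v_0, v_1, …`.

Suppose there is no induced `P_s`. For `i ≤ j` the segment `{v_i, …, v_j}` is connected, so it
contains a shortest path from `v_i` to `v_j` inside the segment; being induced, that path has fewer
than `s` vertices. List it as `x_0(i,j), …, x_s(i,j)`, padded by repeating its last vertex
(`exists_short_walk`). Colour each quadruple `i < j < k < l` by the set of pairs `(a, b)` such that
`x_a(i,j)` is adjacent to `x_b(k,l)`, and let `w_0 < w_1 < …` be a long sequence on which the
colour is constant (`ramsey_seq`).

* If the colour contains a pair `(a, a)`, the vertices `x_a(w_{2i}, w_{2i+1})` form a clique.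
* If it contains `(a, b)` but neither `(a, a)` nor `(b, b)`, then many vertices
  `x_a(w_{2i}, w_{2i+1})` followed by as many vertices `x_b(w_{2i}, w_{2i+1})` induce a `K_{q,q}`.
* If it is empty, let `U` be the union of the paths `x(w_i, w_{i+1})`. It is connected, but an edge
  inside `U` moves the index `i` by at most one. So a shortest path in `U` from `w_0` to `w_m` is a
  long induced path (`long_induced`), a contradiction.
-/

open SimpleGraph

/-- The finite Ramsey theorem for `r`-tuples and a finite set of colours, in the form: a large
subset of `Fin n` has a homogeneous subset of size at least `m`. A tuple is encoded as a
strictly increasing list, so that fixing the smallest entry of a tuple turns a colouring of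
`(r+1)`-tuples into one of `r`-tuples. -/
theorem ramsey_list (κ : Type) [Finite κ] (r : ℕ) : ∀ m : ℕ, ∃ N : ℕ, ∀ (n : ℕ)
    (S : Finset (Fin n)) (c : List (Fin n) → κ), N ≤ S.card →
    ∃ T ⊆ S, m ≤ T.card ∧ ∃ k : κ, ∀ L : List (Fin n), L.Pairwise (· < ·) → L.length = r →
      (∀ x ∈ L, x ∈ T) → c L = k := by
  classical
  have := Fintype.ofFinite κ
  induction r with
  | zero =>
    intro m
    refine ⟨m, fun n S c h => ⟨S, subset_rfl, h, c [], fun L _ hl _ => ?_⟩⟩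
    rw [List.length_eq_zero_iff.1 hl]
  | succ r ih =>
    -- a subset on which the colour of a tuple depends only on its smallest entry
    have key : ∀ m : ℕ, ∃ N : ℕ, ∀ (n : ℕ)
        (S : Finset (Fin n)) (c : List (Fin n) → κ), N ≤ S.card →
        ∃ T ⊆ S, m ≤ T.card ∧ ∃ g : Fin n → κ, ∀ a ∈ T, ∀ L : List (Fin n),
          (a :: L).Pairwise (· < ·) → L.length = r → (∀ x ∈ L, x ∈ T) → c (a :: L) = g a := by
      intro m
      induction m with
      | zero =>
        refine ⟨0, fun n S c _ => ⟨∅, by simp, by simp, fun _ => c [], by simp⟩⟩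
      | succ m ihm =>
        obtain ⟨N₁, h₁⟩ := ihm
        obtain ⟨N₂, h₂⟩ := ih N₁
        refine ⟨N₂ + 1, fun n S c hS => ?_⟩
        have hne : S.Nonempty := Finset.card_pos.1 (by omega)
        set a := S.min' hne with ha
        have haS : a ∈ S := S.min'_mem hne
        obtain ⟨T₂, hT₂, hc₂, k, hk⟩ := h₂ n (S.erase a) (fun L => c (a :: L))
          (by rw [Finset.card_erase_of_mem haS]; omega)
        obtain ⟨T₁, hT₁, hc₁, g, hg⟩ := h₁ n T₂ c hc₂
        have hlt : ∀ x ∈ T₁, a < x := fun x hx =>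
          S.min'_lt_of_mem_erase_min' hne (hT₂ (hT₁ hx))
        have haT : a ∉ T₁ := fun h => lt_irrefl _ (hlt a h)
        refine ⟨insert a T₁, ?_, ?_, fun b => if b = a then k else g b, ?_⟩
        · refine Finset.insert_subset haS fun x hx => Finset.mem_of_mem_erase (hT₂ (hT₁ hx))
        · rw [Finset.card_insert_of_notMem haT]; omega
        · intro b hb L hL hlen hmem
          have hab : a ≤ b := by
            rcases Finset.mem_insert.1 hb with h | h
            · exact h.ge
            · exact (hlt b h).le
          have hLT : ∀ x ∈ L, x ∈ T₁ := fun x hx => by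
            have hbx : b < x := (List.pairwise_cons.1 hL).1 x hx
            exact (Finset.mem_insert.1 (hmem x hx)).resolve_left (hab.trans_lt hbx).ne'
          by_cases hba : b = a
          · simp only [hba, if_true]
            exact hk L (List.pairwise_cons.1 hL).2 hlen fun x hx => hT₁ (hLT x hx)
          · simp only [hba, if_false]
            exact hg b ((Finset.mem_insert.1 hb).resolve_left hba) L hL hlen hLT
    intro m
    obtain ⟨N, hN⟩ := key (Fintype.card κ * m + 1)
    refine ⟨N, fun n S c hS => ?_⟩
    obtain ⟨T, hT, hcT, g, hg⟩ := hN n S c hS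
    obtain ⟨k, -, hk⟩ := Finset.exists_lt_card_fiber_of_mul_lt_card_of_maps_to
      (s := T) (t := Finset.univ) (f := g) (n := m) (fun _ _ => Finset.mem_univ _)
      (by rw [Finset.card_univ]; omega)
    refine ⟨T.filter (fun x => g x = k), (Finset.filter_subset _ _).trans hT, hk.le, k, ?_⟩
    intro L hL hlen hmem
    match L, hL, hlen, hmem with
    | a :: L, hL, hlen, hmem =>
      have ha := Finset.mem_filter.1 (hmem a (by simp))
      rw [hg a ha.1 L hL (by simpa using hlen) fun x hx =>
        (Finset.mem_filter.1 (hmem x (by simp [hx]))).1, ha.2]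

/-- Ramsey's theorem for quadruples, with the homogeneous set listed as a sequence `w`, of which
only the first `m` terms matter. -/
theorem ramsey_seq (κ : Type) [Finite κ] (m : ℕ) (hm : 0 < m) : ∃ N : ℕ, ∀ (n : ℕ)
    (c : Fin n → Fin n → Fin n → Fin n → κ), N ≤ n →
    ∃ w : ℕ → Fin n, (∀ i j, i < j → j < m → w i < w j) ∧ ∃ e : κ, ∀ i j k l, i < j → j < k →
      k < l → l < m → c (w i) (w j) (w k) (w l) = e := by
  obtain ⟨N, hN⟩ := ramsey_list (Option κ) 4 m
  refine ⟨N, fun n c hn => ?_⟩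
  obtain ⟨T, -, hT, e, he⟩ := hN n Finset.univ
    (fun L => match L with
      | [i, j, k, l] => some (c i j k l)
      | _ => none) (by simpa using hn)
  obtain ⟨T', hT', hc⟩ := Finset.exists_subset_card_eq hT
  have hw : ∃ w : ℕ → Fin n, (∀ i j, i < j → j < m → w i < w j) ∧ ∀ i < m, w i ∈ T := by
    refine ⟨fun i => if h : i < m then T'.orderEmbOfFin hc ⟨i, h⟩
      else T'.orderEmbOfFin hc ⟨0, hm⟩, fun i j hij hj => ?_, fun i hi => ?_⟩
    · simp [hj, hij.trans hj, hij]
    · simp only [hi, dif_pos]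
      exact hT' (T'.orderEmbOfFin_mem hc _)
  obtain ⟨w, hw, hwT⟩ := hw
  refine ⟨w, hw, ?_⟩
  have hs : ∀ i j k l, i < j → j < k → k < l → l < m →
      some (c (w i) (w j) (w k) (w l)) = e := by
    intro i j k l hij hjk hkl hl
    refine he [w i, w j, w k, w l] ?_ rfl ?_
    · simp only [List.pairwise_cons, List.mem_cons, List.not_mem_nil, or_false, forall_eq_or_imp,
        forall_eq, false_imp_iff, implies_true, List.Pairwise.nil, and_true]
      refine ⟨⟨?_, ?_, ?_⟩, ⟨?_, ?_⟩, ?_⟩ <;> apply hw <;> omega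
    · simp only [List.mem_cons, List.not_mem_nil, or_false, forall_eq_or_imp, forall_eq]
      refine ⟨?_, ?_, ?_, ?_⟩ <;> apply hwT <;> omega
  rcases e with _ | e
  · -- no quadruple exists in this case, since every quadruple receives a colour `some _`
    by_cases h4 : 4 ≤ m
    · exact absurd (hs 0 1 2 3 (by omega) (by omega) (by omega) (by omega)) (by simp)
    · exact ⟨c (w 0) (w 0) (w 0) (w 0), fun i j k l _ _ _ _ => by omega⟩
  · exact ⟨e, fun i j k l h₁ h₂ h₃ h₄ => Option.some_injective _ (hs i j k l h₁ h₂ h₃ h₄)⟩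

theorem containsInd_of_fun {α β : Type*} {H : SimpleGraph α} {G : SimpleGraph β} (f : α → β)
    (hf : Function.Injective f) (h : ∀ i j, G.Adj (f i) (f j) ↔ H.Adj i j) : ContainsInd H G :=
  ⟨⟨⟨f, hf⟩, h _ _⟩⟩

theorem ContainsInd.trans {α β γ : Type*} {H : SimpleGraph α} {G : SimpleGraph β}
    {K : SimpleGraph γ} (h₁ : ContainsInd H G) (h₂ : ContainsInd G K) : ContainsInd H K :=
  ⟨h₁.some.trans h₂.some⟩

theorem containsInd_induce {V : Type*} (G : SimpleGraph V) (U : Set V) :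
    ContainsInd (G.induce U) G :=
  ⟨SimpleGraph.Embedding.induce U⟩

/-- The first `s` vertices of a shortest path induce a chordless path. -/
theorem containsInd_path_of_dist {V : Type*} {G : SimpleGraph V} {u v : V} (h : G.Reachable u v)
    {s : ℕ} (hs : s ≤ G.dist u v + 1) : ContainsInd (pathGraph s) G := by
  obtain ⟨p, hp⟩ := h.exists_walk_length_eq_dist
  -- an edge or a coincidence between two vertices of `p` gives a shortcut
  have hadj : ∀ i j, i < j → j ≤ p.length → G.Adj (p.getVert i) (p.getVert j) → j = i + 1 := by
    intro i j hij hj ha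
    have := dist_le ((p.take i).append (Walk.cons ha (p.drop j)))
    simp only [Walk.length_append, Walk.length_cons, Walk.take_length, Walk.drop_length] at this
    omega
  have hne : ∀ i j, i < j → j ≤ p.length → p.getVert i ≠ p.getVert j := by
    intro i j hij hj ha
    have := dist_le ((p.take i).append ((p.drop j).copy ha.symm rfl))
    simp only [Walk.length_append, Walk.length_copy, Walk.take_length, Walk.drop_length] at this
    omega
  refine containsInd_of_fun (fun i => p.getVert i) (fun i j hij => ?_) fun i j => ?_
  · by_contra hc
    rcases lt_or_gt_of_ne hc with h | h
    · exact hne i j h (by omega) hij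
    · exact hne j i h (by omega) hij.symm
  · simp only [pathGraph_adj]
    constructor
    · intro ha
      rcases lt_trichotomy (i : ℕ) j with h | h | h
      · exact Or.inl (hadj i j h (by omega) ha).symm
      · rw [h] at ha
        exact absurd ha (G.loopless.irrefl _)
      · exact Or.inr (hadj j i h (by omega) ha.symm).symm
    · rintro (h | h)
      · rw [← h]
        exact p.adj_getVert_succ (by omega)
      · rw [← h]
        exact (p.adj_getVert_succ (by omega)).symm

/-- Without an induced `P_s`, any two vertices `i ≤ j` of a traceable graph are joined, inside the
segment between them, by a walk with exactly `s` steps, where repeating a vertex counts as a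
step. -/
theorem exists_short_walk {n s : ℕ} {G : SimpleGraph (Fin n)}
    (hG : ∀ i j : Fin n, (i : ℕ) + 1 = j → G.Adj i j) (hP : ¬ ContainsInd (pathGraph s) G)
    (i j : Fin n) (hij : i ≤ j) :
    ∃ x : ℕ → Fin n, x 0 = i ∧ x s = j ∧ (∀ a, i ≤ x a ∧ x a ≤ j) ∧
      ∀ a, x a = x (a + 1) ∨ G.Adj (x a) (x (a + 1)) := by
  have hr : ∀ (d : ℕ) (k : Fin n) (hk : k ∈ Set.Icc i j), (k : ℕ) = i + d →
      (G.induce (Set.Icc i j)).Reachable ⟨i, le_rfl, hij⟩ ⟨k, hk⟩ := by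
    intro d
    induction d with
    | zero =>
      intro k hk h
      obtain rfl : k = i := Fin.ext h
      exact Reachable.refl _
    | succ d ih =>
      intro k hk h
      have hk' := hk.2
      rw [Fin.le_def] at hk'
      have hlt : (i : ℕ) + d < n := by omega
      have hm : (⟨i + d, hlt⟩ : Fin n) ∈ Set.Icc i j := by
        constructor <;> rw [Fin.le_def] <;> dsimp only <;> omega
      refine (ih ⟨i + d, hlt⟩ hm rfl).trans (Adj.reachable ?_)
      have hadj : G.Adj ⟨i + d, hlt⟩ k := hG _ _ (by dsimp only; omega)
      exact hadj
  have hreach := hr (j - i) j ⟨hij, le_rfl⟩ (by rw [Fin.le_def] at hij; omega)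
  have hd : ¬ s ≤ _ := fun h =>
    hP ((containsInd_path_of_dist hreach h).trans (containsInd_induce _ _))
  obtain ⟨p, hp⟩ := hreach.exists_walk_length_eq_dist
  refine ⟨fun a => p.getVert a, by simp, ?_, fun a => (p.getVert a).2, fun a => ?_⟩
  · simp only
    rw [p.getVert_of_length_le (by omega)]
  · rcases lt_or_ge a p.length with h | h
    · exact Or.inr (p.adj_getVert_succ h)
    · left
      simp only
      rw [p.getVert_of_length_le h, p.getVert_of_length_le (by omega)]

/-- A function that increases by at most one along each edge increases by at most the distance. -/
theorem level_le_dist {V : Type*} {G : SimpleGraph V} (φ : V → ℕ)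
    (hφ : ∀ u v, G.Adj u v → φ v ≤ φ u + 1) {u v : V} (h : G.Reachable u v) :
    φ v ≤ φ u + G.dist u v := by
  obtain ⟨p, hp⟩ := h.exists_walk_length_eq_dist
  rw [← hp]
  clear hp h
  induction p with
  | nil => simp
  | cons ha p ih =>
    have := hφ _ _ ha
    rw [Walk.length_cons]
    omega

/-- Consecutive short walks `y 0, y 1, …`, where `y i` runs from `w i` to `w (i + 1)` and walks that
are not neighbours in the sequence have no edges between them, contain a long induced path. -/
theorem long_induced {n s m : ℕ} {G : SimpleGraph (Fin n)} (w : ℕ → Fin n)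
    (y : ℕ → ℕ → Fin n) (hw : ∀ i j, i < j → j ≤ m → w i < w j)
    (h0 : ∀ i < m, y i 0 = w i) (h1 : ∀ i < m, y i s = w (i + 1))
    (hI : ∀ i < m, ∀ a, w i ≤ y i a ∧ y i a ≤ w (i + 1))
    (hstep : ∀ i < m, ∀ a, y i a = y i (a + 1) ∨ G.Adj (y i a) (y i (a + 1)))
    (hfar : ∀ i j, i + 1 < j → j < m → ∀ a ≤ s, ∀ b ≤ s, ¬ G.Adj (y i a) (y j b))
    (hm : 0 < m) : ContainsInd (pathGraph m) G := by
  let U : Set (Fin n) := {v | ∃ i < m, ∃ a ≤ s, y i a = v}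
  have hU : ∀ i < m, ∀ a ≤ s, y i a ∈ U := fun i hi a ha => ⟨i, hi, a, ha, rfl⟩
  have hwU : ∀ i ≤ m, w i ∈ U := by
    intro i hi
    rcases hi.lt_or_eq with h | h
    · rw [← h0 i h]
      exact hU i h 0 (by omega)
    · obtain ⟨k, rfl⟩ : ∃ k, i = k + 1 := ⟨i - 1, by omega⟩
      rw [← h1 k (by omega)]
      exact hU k (by omega) s le_rfl
  have hr1 : ∀ i (hi : i < m), ∀ a (ha : a ≤ s),
      (G.induce U).Reachable ⟨y i 0, hU i hi 0 (by omega)⟩ ⟨y i a, hU i hi a ha⟩ := by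
    intro i hi a
    induction a with
    | zero => intro _; exact Reachable.refl _
    | succ a ih =>
      intro ha
      refine (ih (by omega)).trans ?_
      rcases hstep i hi a with h | h
      · have : (⟨y i a, hU i hi a (by omega)⟩ : U) = ⟨y i (a + 1), hU i hi _ ha⟩ := Subtype.ext h
        rw [this]
      · exact Adj.reachable h
  have hr2 : ∀ i (hi : i ≤ m),
      (G.induce U).Reachable ⟨w 0, hwU 0 (by omega)⟩ ⟨w i, hwU i hi⟩ := by
    intro i
    induction i with
    | zero => intro _; exact Reachable.refl _
    | succ i ih =>
      intro hi
      refine (ih (by omega)).trans ?_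
      have := hr1 i hi s le_rfl
      simpa only [h0 i hi, h1 i hi] using this
  have hlev : ∀ v : U, ∃ i < m, ∃ a ≤ s, y i a = v := fun v => v.2
  choose φ hφm a ha hya using hlev
  have hφ : ∀ u v, (G.induce U).Adj u v → φ v ≤ φ u + 1 := by
    intro u v huv
    by_contra hc
    have huv' : G.Adj u v := huv
    rw [← hya u, ← hya v] at huv'
    exact hfar _ _ (by omega) (hφm v) _ (ha u) _ (ha v) huv'
  have hd := level_le_dist φ hφ (hr2 m le_rfl)
  -- the end vertices `w 0` and `w m` lie only on the first and on the last walk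
  have e0 : φ ⟨w 0, hwU 0 (by omega)⟩ = 0 := by
    by_contra hc
    have h := (hI _ (hφm ⟨w 0, hwU 0 (by omega)⟩) (a ⟨w 0, hwU 0 (by omega)⟩)).1
    rw [hya] at h
    exact absurd (hw 0 _ (Nat.pos_of_ne_zero hc) (hφm _).le) (not_lt.2 h)
  have em : m ≤ φ ⟨w m, hwU m le_rfl⟩ + 1 := by
    by_contra hc
    have h := (hI _ (hφm ⟨w m, hwU m le_rfl⟩) (a ⟨w m, hwU m le_rfl⟩)).2
    rw [hya] at h
    exact absurd (hw _ m (by omega) le_rfl) (not_lt.2 h)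
  exact (containsInd_path_of_dist (hr2 m le_rfl) (by omega)).trans (containsInd_induce _ _)

/-- The theorem for a traceable graph whose vertices are numbered along a Hamiltonian path. -/
theorem traceable_ramsey (s t q : ℕ) : ∃ Z : ℕ, ∀ (n : ℕ) (G : SimpleGraph (Fin n)), Z ≤ n →
    (∀ i j : Fin n, (i : ℕ) + 1 = j → G.Adj i j) →
    ContainsInd (pathGraph s) G ∨
      ContainsInd (completeGraph (Fin t)) G ∨
      ContainsInd (completeBipartiteGraph (Fin q) (Fin q)) G := by
  classical
  obtain ⟨Z, hZ⟩ := ramsey_seq (Fin (s + 1) → Fin (s + 1) → Prop)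
    (s + 3 + 2 * t + 4 * q) (by omega)
  refine ⟨Z, fun n G hn hG => ?_⟩
  by_cases hP : ContainsInd (pathGraph s) G
  · exact Or.inl hP
  right
  have hx : ∀ i j : Fin n, ∃ x : ℕ → Fin n, i ≤ j → x 0 = i ∧ x s = j ∧
      (∀ a, i ≤ x a ∧ x a ≤ j) ∧ ∀ a, x a = x (a + 1) ∨ G.Adj (x a) (x (a + 1)) := by
    intro i j
    by_cases hij : i ≤ j
    · obtain ⟨x, hx⟩ := exists_short_walk hG hP i j hij
      exact ⟨x, fun _ => hx⟩
    · exact ⟨fun _ => i, fun h => absurd h hij⟩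
  choose x hx using hx
  obtain ⟨w, hw, e, he⟩ := hZ n (fun i j k l a b => G.Adj (x i j a) (x k l b)) hn
  have he' : ∀ i j k l, i < j → j < k → k < l → l < s + 3 + 2 * t + 4 * q →
      ∀ a b : Fin (s + 1), G.Adj (x (w i) (w j) a) (x (w k) (w l) b) ↔ e a b := by
    intro i j k l h₁ h₂ h₃ h₄ a b
    rw [← he i j k l h₁ h₂ h₃ h₄]
  by_cases hdiag : ∃ a, e a a
  · obtain ⟨a, hea⟩ := hdiag
    left
    have hadj : ∀ i j : Fin t, i < j → G.Adj (x (w (2 * i)) (w (2 * i + 1)) a)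
        (x (w (2 * j)) (w (2 * j + 1)) a) := fun i j hij =>
      (he' _ _ _ _ (by omega) (by omega) (by omega) (by omega) a a).2 hea
    have hadj' : ∀ i j : Fin t, i ≠ j → G.Adj (x (w (2 * i)) (w (2 * i + 1)) a)
        (x (w (2 * j)) (w (2 * j + 1)) a) := fun i j hij => by
      rcases lt_or_gt_of_ne hij with h | h
      · exact hadj i j h
      · exact (hadj j i h).symm
    refine containsInd_of_fun (fun i => x (w (2 * i)) (w (2 * i + 1)) a) (fun i j hij => ?_)
      fun i j => ?_
    · by_contra hc
      exact (hadj' i j hc).ne hij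
    · simp only [completeGraph, top_adj]
      exact ⟨fun h hc => G.loopless.irrefl _ (hc ▸ h), hadj' i j⟩
  by_cases hoff : ∃ a b, e a b
  · obtain ⟨a, b, hab⟩ := hoff
    right
    -- positions `i < q` carry vertices of type `a`, positions `q + i` vertices of type `b`
    let z : ℕ → Fin (s + 1) → Fin n := fun i c => x (w (2 * i)) (w (2 * i + 1)) c
    have hz : ∀ i j, i < j → j < 2 * q → ∀ c d, G.Adj (z i c) (z j d) ↔ e c d :=
      fun i j hij hj c d => he' _ _ _ _ (by omega) (by omega) (by omega) (by omega) c d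
    have hlt : ∀ i j, i < j → j < 2 * q → ∀ c d, z i c < z j d := by
      intro i j hij hj c d
      have h₁ := ((hx (w (2 * i)) (w (2 * i + 1))
        (hw _ _ (by omega) (by omega)).le).2.2.1 c).2
      have h₂ := ((hx (w (2 * j)) (w (2 * j + 1))
        (hw _ _ (by omega) (by omega)).le).2.2.1 d).1
      exact h₁.trans_lt ((hw (2 * i + 1) (2 * j) (by omega) (by omega)).trans_le h₂)
    have hinj : ∀ i j, i < 2 * q → j < 2 * q → ∀ c d, z i c = z j d → i = j := by
      intro i j hi hj c d h
      by_contra hc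
      rcases lt_or_gt_of_ne hc with h' | h'
      · exact (hlt i j h' hj c d).ne h
      · exact (hlt j i h' hi d c).ne h.symm
    have hsame : ∀ i j, i < 2 * q → j < 2 * q → ∀ c, ¬ G.Adj (z i c) (z j c) := by
      intro i j hi hj c h
      rcases lt_trichotomy i j with h' | h' | h'
      · exact hdiag ⟨c, (hz i j h' hj c c).1 h⟩
      · exact G.loopless.irrefl _ (h' ▸ h)
      · exact hdiag ⟨c, (hz j i h' hi c c).1 h.symm⟩
    refine containsInd_of_fun
      (Sum.elim (fun i : Fin q => z i a) (fun i : Fin q => z (q + i) b))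
      (fun u v huv => ?_) fun u v => ?_
    · rcases u with i | i <;> rcases v with j | j <;> simp only [Sum.elim_inl, Sum.elim_inr] at huv
      · exact congrArg _ (Fin.ext (hinj _ _ (by omega) (by omega) _ _ huv))
      · have := hinj _ _ (by omega) (by omega) _ _ huv
        omega
      · have := hinj _ _ (by omega) (by omega) _ _ huv
        omega
      · have := hinj _ _ (by omega) (by omega) _ _ huv
        exact congrArg _ (Fin.ext (by omega))
    · rcases u with i | i <;> rcases v with j | j <;>
        simp only [Sum.elim_inl, Sum.elim_inr,
          completeBipartiteGraph_adj, Sum.isLeft_inl, Sum.isLeft_inr, Sum.isRight_inl,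
          Sum.isRight_inr]
      · simpa using hsame i j (by omega) (by omega) a
      · simpa using (hz i (q + j) (by omega) (by omega) a b).2 hab
      · simpa using ((hz j (q + i) (by omega) (by omega) a b).2 hab).symm
      · simpa using hsame (q + i) (q + j) (by omega) (by omega) b
  -- the colour is empty, so consecutive short walks produce a long induced path
  · exfalso
    push Not at hoff
    have hlong : ContainsInd (pathGraph (s + 1)) G := by
      have hle : ∀ i < s + 1, w i ≤ w (i + 1) := fun i hi => (hw _ _ (by omega) (by omega)).le
      refine long_induced (s := s) w (fun i => x (w i) (w (i + 1)))
        (fun i j h₁ h₂ => hw i j h₁ (by omega))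
        (fun i hi => (hx _ _ (hle i hi)).1) (fun i hi => (hx _ _ (hle i hi)).2.1)
        (fun i hi => (hx _ _ (hle i hi)).2.2.1) (fun i hi => (hx _ _ (hle i hi)).2.2.2)
        (fun i j hij hj a ha b hb hadj => ?_) (by omega)
      exact hoff ⟨a, by omega⟩ ⟨b, by omega⟩
        ((he' i (i + 1) j (j + 1) (by omega) hij (by omega) (by omega) ⟨a, by omega⟩
          ⟨b, by omega⟩).1 hadj)
    refine hP (ContainsInd.trans ⟨⟨⟨Fin.castSucc, Fin.castSucc_injective s⟩, ?_⟩⟩ hlong)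
    intro i j
    simp [pathGraph_adj]

/-- For every `s`, `t` and `q` there is `Z = Z(s,t,q)` such that every graph
containing a path on at least `Z` vertices as a subgraph contains `P_s`, `K_t` or
`K_{q,q}` as an induced subgraph. -/
theorem stmt_2 (s t q : ℕ) : ∃ Z : ℕ, ∀ (β : Type) [Fintype β] (G : SimpleGraph β),
    (∃ n : ℕ, Z ≤ n ∧ ContainsSub (pathGraph n) G) →
    ContainsInd (pathGraph s) G ∨
      ContainsInd (completeGraph (Fin t)) G ∨
      ContainsInd (completeBipartiteGraph (Fin q) (Fin q)) G := by
  obtain ⟨Z, hZ⟩ := traceable_ramsey s t q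
  refine ⟨Z, fun β _ G ⟨n, hn, f, hf⟩ => ?_⟩
  have hemb : ContainsInd (G.comap f) G := ⟨SimpleGraph.Embedding.comap ⟨f, hf⟩ G⟩
  rcases hZ n (G.comap f) hn (fun i j hij => f.map_rel (pathGraph_adj.2 (Or.inl hij)))
    with h | h | h
  · exact Or.inl (h.trans hemb)
  · exact Or.inr (Or.inl (h.trans hemb))
  · exact Or.inr (Or.inr (h.trans hemb))
end

section
/- For every t and q there exists a number N = N(t,q) such that every graph containing the complete bipartite graph K_{N,N} as a (not necessarily induced) subgraph contains either the complete graph K_t or the complete bipartite graph K_{q,q} as an induced subgraph. -/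
/-!
Apply Ramsey's theorem (`exists_isNClique_or_isNIndepSet`) to each side of the biclique `K_{N,N}`,
where `N` is a Ramsey number for `(t, q)`. If either side contains a clique on `t` vertices, this is
an induced `K_t`. Otherwise each side contains an independent set of size `q`, and since all edges
between the two sides are present, these two sets together induce a `K_{q,q}`.

Ramsey's theorem itself is proved by the usual recursion `R(t+1, q+1) ≤ R(t, q+1) + R(t+1, q) + 1`:
split the remaining vertices into neighbours and non-neighbours of a chosen vertex.
-/

open SimpleGraph

/-- Ramsey's theorem for two colours, relative to a finite vertex set `s`. -/
theorem exists_isNClique_or_isNIndepSet (t q : ℕ) :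
    ∃ N : ℕ, ∀ (β : Type) (G : SimpleGraph β) (s : Finset β), N ≤ s.card →
      (∃ c ⊆ s, G.IsNClique t c) ∨ (∃ c ⊆ s, G.IsNIndepSet q c) := by
  classical
  induction t generalizing q with
  | zero => exact ⟨0, fun β G s _ => Or.inl ⟨∅, by simp, by simp [isNClique_iff]⟩⟩
  | succ t iht =>
    induction q with
    | zero => exact ⟨0, fun β G s _ => Or.inr ⟨∅, by simp, by simp [isNIndepSet_iff]⟩⟩
    | succ q ihq =>
      obtain ⟨N₁, h₁⟩ := iht (q + 1)
      obtain ⟨N₂, h₂⟩ := ihq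
      refine ⟨N₁ + N₂ + 1, fun β G s hs => ?_⟩
      obtain ⟨v, hv⟩ : s.Nonempty := Finset.card_pos.mp (by omega)
      have hcard := Finset.card_filter_add_card_filter_not (s := s.erase v) (G.Adj v)
      rw [Finset.card_erase_of_mem hv] at hcard
      have hsub : ∀ (p : β → Prop) [DecidablePred p] (c : Finset β), c ⊆ (s.erase v).filter p →
          insert v c ⊆ s ∧ v ∉ c ∧ ∀ x ∈ c, p x := by
        intro p _ c hc
        refine ⟨Finset.insert_subset hv fun x hx => ?_, fun hx => ?_, fun x hx => ?_⟩ <;>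
          have := hc hx <;> simp_all
      rcases Nat.lt_or_ge ((s.erase v).filter (G.Adj v)).card N₁ with hlt | hge
      · rcases h₂ β G ((s.erase v).filter fun x => ¬ G.Adj v x) (by omega) with
          ⟨c, hc, hK⟩ | ⟨c, hc, hI⟩
        · exact Or.inl ⟨c, (Finset.subset_insert v c).trans (hsub _ c hc).1, hK⟩
        · obtain ⟨hcs, hvc, hadj⟩ := hsub _ c hc
          refine Or.inr ⟨insert v c, hcs, ?_, by rw [Finset.card_insert_of_notMem hvc, hI.2]⟩
          rw [Finset.coe_insert, isIndepSet_iff, Set.pairwise_insert]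
          exact ⟨hI.1, fun x hx _ => ⟨hadj x hx, fun h => hadj x hx h.symm⟩⟩
      · rcases h₁ β G _ hge with ⟨c, hc, hK⟩ | ⟨c, hc, hI⟩
        · obtain ⟨hcs, hvc, hadj⟩ := hsub _ c hc
          exact Or.inl ⟨insert v c, hcs, hK.insert hadj⟩
        · exact Or.inr ⟨c, (Finset.subset_insert v c).trans (hsub _ c hc).1, hI⟩

theorem containsInd_completeGraph_of_isNClique {β : Type} {G : SimpleGraph β} {t : ℕ}
    {c : Finset β} (h : G.IsNClique t c) : ContainsInd (completeGraph (Fin t)) G := by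
  let e := (c.equivFinOfCardEq h.2).symm
  have he : Function.Injective fun i => (e i : β) := Subtype.val_injective.comp e.injective
  refine ⟨⟨⟨fun i => e i, he⟩, fun {i j} => ⟨fun hij => ?_, fun hij => ?_⟩⟩⟩
  · exact fun hEq => hij.ne (by simp [hEq])
  · exact h.1 (e i).2 (e j).2 (he.ne hij)

theorem containsInd_completeBipartiteGraph_of_isNIndepSet {β : Type} {G : SimpleGraph β} {q : ℕ}
    {c d : Finset β} (hc : G.IsNIndepSet q c) (hd : G.IsNIndepSet q d)
    (hcd : ∀ x ∈ c, ∀ y ∈ d, G.Adj x y) :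
    ContainsInd (completeBipartiteGraph (Fin q) (Fin q)) G := by
  let e := (c.equivFinOfCardEq hc.2).symm
  let f := (d.equivFinOfCardEq hd.2).symm
  have he : Function.Injective fun i => (e i : β) := Subtype.val_injective.comp e.injective
  have hf : Function.Injective fun i => (f i : β) := Subtype.val_injective.comp f.injective
  have hef : ∀ i j, G.Adj (e i) (f j) := fun i j => hcd _ (e i).2 _ (f j).2
  have hindep : ∀ {a : Finset β}, G.IsNIndepSet q a → ∀ x y : a, ¬ G.Adj x y :=
    fun ha x y hxy => ha.1 x.2 y.2 hxy.ne hxy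
  refine ⟨⟨⟨Sum.elim (fun i => (e i : β)) (fun i => (f i : β)),
    he.sumElim hf fun i j => (hef i j).ne⟩, fun {x y} => ?_⟩⟩
  rcases x with i | i <;> rcases y with j | j
  · simpa using hindep hc (e i) (e j)
  · simpa using hef i j
  · simpa using (hef j i).symm
  · simpa using hindep hd (f i) (f j)

/-- For every `t` and `q` there is `N = N(t,q)` such that every graph containing
`K_{N,N}` as a subgraph contains `K_t` or `K_{q,q}` as an induced subgraph. -/
theorem stmt_3 (t q : ℕ) : ∃ N : ℕ, ∀ (β : Type) [Fintype β] (G : SimpleGraph β),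
    ContainsSub (completeBipartiteGraph (Fin N) (Fin N)) G →
    ContainsInd (completeGraph (Fin t)) G ∨
      ContainsInd (completeBipartiteGraph (Fin q) (Fin q)) G := by
  obtain ⟨N, hN⟩ := exists_isNClique_or_isNIndepSet t q
  refine ⟨N, fun β _ G ⟨f, hf⟩ => ?_⟩
  have hl : Function.Injective fun i => f (Sum.inl i) := hf.comp Sum.inl_injective
  have hr : Function.Injective fun i => f (Sum.inr i) := hf.comp Sum.inr_injective
  rcases hN β G (Finset.univ.map ⟨_, hl⟩) (by simp) with ⟨c, -, hK⟩ | ⟨c, hc, hcI⟩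
  · exact Or.inl (containsInd_completeGraph_of_isNClique hK)
  rcases hN β G (Finset.univ.map ⟨_, hr⟩) (by simp) with ⟨d, -, hK⟩ | ⟨d, hd, hdI⟩
  · exact Or.inl (containsInd_completeGraph_of_isNClique hK)
  refine Or.inr (containsInd_completeBipartiteGraph_of_isNIndepSet hcI hdI fun x hx y hy => ?_)
  obtain ⟨i, -, rfl⟩ := Finset.mem_map.mp (hc hx)
  obtain ⟨j, -, rfl⟩ := Finset.mem_map.mp (hd hy)
  exact f.map_adj (by simp)
end

section
/- The set of canonical graphs is an antichain with respect to the induced subgraph relation: whenever two canonical graphs are non-isomorphic, neither one is isomorphic to an induced subgraph of the other. Concretely, no two of the following admit a graph embedding from one into the other: holes C_n and C_m with 4 ≤ n < m; H-graphs, semi-tight H-graphs, and tight H-graphs with bodies of any two lengths, except a graph into itself; and no hole embeds into any H-graph or vice versa. -/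
/-!
A degree argument settles almost everything. In a hole every vertex has exactly two
neighbours, and they are nonadjacent. In an H-graph only the two ends of the body have three
or more neighbours, and a wing never has two distinct nonadjacent neighbours.

* A hole inside a hole is closed under taking neighbours (`cycleGraph_nbr`), hence is the whole
  hole, and the lengths agree.
* A hole inside an H-graph would avoid the wings (`hGraphT_wing`), hence lie on the body, where
  its vertex of smallest index could not have two neighbours. Conversely an end of a body has
  three neighbours, which is too many for a hole.
* An embedding of an H-graph with body length `m` into one with body length `m'` forces `m ≤ m'`
  by counting vertices. If `m < m'`, then `m ≠ 1`, since a vertex of degree four occurs only for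
  body length one; so the two ends of the smaller body go to the two ends of the larger one,
  which are at distance `m' - 1`, although a walk of length `m - 1` joins them. If `m = m'`, the
  embedding is bijective and preserves the set of vertices with at most one neighbour; this set
  has `4`, `2` or `0` elements according to the type (`hGraphT_ncard_leaf`).
-/

open SimpleGraph

/-! ### Holes -/

/-- A vertex of a cycle has at most two neighbours. -/
theorem cycleGraph_nbr {n : ℕ} {x a b c : Fin n} (ha : (cycleGraph n).Adj x a)
    (hb : (cycleGraph n).Adj x b) (hc : (cycleGraph n).Adj x c) (hab : a ≠ b) :
    c = a ∨ c = b := by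
  match n with
  | 0 => exact x.elim0
  | 1 => exact absurd (Subsingleton.elim _ _) ha.ne
  | n + 2 =>
    rw [cycleGraph_adj] at ha hb hc
    grind

/-- Every vertex of a hole has two distinct nonadjacent neighbours, namely its successor `a` and
its predecessor. -/
theorem cycleGraph_two_nbr {n : ℕ} (hn : 4 ≤ n) (x : Fin n) :
    ∃ a b : Fin n, (a : ℕ) = (x + 1) % n ∧ (cycleGraph n).Adj x a ∧ (cycleGraph n).Adj x b ∧
      a ≠ b ∧ ¬ (cycleGraph n).Adj a b := by
  obtain ⟨n, rfl⟩ : ∃ k, n = k + 4 := ⟨n - 4, by omega⟩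
  have h1 : ((1 : Fin (n + 4)) : ℕ) = 1 := Fin.val_one _
  have h2 : ((1 + 1 : Fin (n + 4)) : ℕ) = 2 := by
    rw [Fin.val_add, h1]; exact Nat.mod_eq_of_lt (by omega)
  have h3 : ((1 + 1 + 1 : Fin (n + 4)) : ℕ) = 3 := by
    rw [Fin.val_add, h2, h1]; exact Nat.mod_eq_of_lt (by omega)
  refine ⟨x + 1, x - 1, by rw [Fin.val_add, h1], ?_, ?_, ?_, ?_⟩
  · rw [cycleGraph_adj]; right; abel
  · rw [cycleGraph_adj]; left; abel
  · intro h
    have : (1 + 1 : Fin (n + 4)) = 0 := by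
      rw [← sub_eq_zero.2 h]; abel
    rw [this] at h2
    simp at h2
  · rw [cycleGraph_adj]
    rintro (h | h)
    · have : (1 + 1 : Fin (n + 4)) = x + 1 - (x - 1) := by abel
      rw [this, h] at h2
      omega
    · have : (1 + 1 + 1 : Fin (n + 4)) = 0 := by
        rw [← sub_eq_zero.2 h.symm]; abel
      rw [this] at h3
      simp at h3

theorem cycle_cycle {n m : ℕ} (hn : 4 ≤ n) (hm : 4 ≤ m)
    (f : cycleGraph n ↪g cycleGraph m) : n = m := by
  have hsucc : ∀ y ∈ Set.range f, ∀ z : Fin m, (z : ℕ) = (y + 1) % m → z ∈ Set.range f := by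
    rintro _ ⟨x, rfl⟩ z hz
    obtain ⟨a, b, -, ha, hb, hab, -⟩ := cycleGraph_two_nbr hn x
    obtain ⟨c, -, hc, hcadj, -⟩ := cycleGraph_two_nbr hm (f x)
    obtain rfl : z = c := Fin.ext (hz.trans hc.symm)
    rcases cycleGraph_nbr (f.map_adj_iff.2 ha) (f.map_adj_iff.2 hb) hcadj
      (f.injective.ne hab) with h | h
    · exact ⟨a, h.symm⟩
    · exact ⟨b, h.symm⟩
  have hshift : ∀ k : ℕ, ∀ z : Fin m, (z : ℕ) = (f ⟨0, by omega⟩ + k) % m → z ∈ Set.range f := by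
    intro k
    induction k with
    | zero =>
      intro z hz
      refine ⟨⟨0, by omega⟩, Fin.ext ?_⟩
      rw [hz, add_zero, Nat.mod_eq_of_lt (Fin.is_lt _)]
    | succ k ih =>
      intro z hz
      refine hsucc ⟨_, Nat.mod_lt _ (by omega)⟩ (ih _ rfl) z ?_
      rw [hz]; simp [add_assoc]
  have hsurj : Function.Surjective f := by
    intro z
    -- going around by `z + m - f 0` steps from `f 0` reaches `z`
    refine hshift (z + m - f ⟨0, by omega⟩) z ?_
    have h0 := (f ⟨0, by omega⟩).is_lt
    rw [Nat.add_sub_cancel' (by omega), Nat.add_mod_right, Nat.mod_eq_of_lt z.is_lt]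
  simpa using Fintype.card_of_bijective ⟨f.injective, hsurj⟩

/-! ### Adjacency and degrees in H-graphs -/

theorem hGraphT_adj_bb {m : ℕ} {t : Fin 3} {i j : Fin m} :
    (hGraphT m t).Adj (Sum.inl i) (Sum.inl j) ↔ (i : ℕ) + 1 = j ∨ (j : ℕ) + 1 = i := by
  simp only [hGraphT, hGraph, fromRel_adj, ne_eq, Sum.inl.injEq, Fin.ext_iff]
  omega

theorem hGraphT_adj_wb {m : ℕ} {t : Fin 3} {w : Fin 4} {i : Fin m} :
    (hGraphT m t).Adj (Sum.inr w) (Sum.inl i) ↔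
      ((w : ℕ) < 2 ∧ (i : ℕ) = 0) ∨ (2 ≤ (w : ℕ) ∧ (i : ℕ) + 1 = m) := by
  simp [hGraphT, hGraph, fromRel_adj]

theorem hGraphT_adj_bw {m : ℕ} {t : Fin 3} {w : Fin 4} {i : Fin m} :
    (hGraphT m t).Adj (Sum.inl i) (Sum.inr w) ↔
      ((w : ℕ) < 2 ∧ (i : ℕ) = 0) ∨ (2 ≤ (w : ℕ) ∧ (i : ℕ) + 1 = m) := by
  rw [adj_comm, hGraphT_adj_wb]

theorem hGraphT_adj_ww {m : ℕ} {t : Fin 3} {w v : Fin 4} :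
    (hGraphT m t).Adj (Sum.inr w) (Sum.inr v) ↔
      ((t : ℕ) = 2 ∧ (w : ℕ) + v = 1) ∨ ((t : ℕ) ≠ 0 ∧ (w : ℕ) + v = 5) := by
  simp only [hGraphT, hGraph, fromRel_adj, ne_eq, Sum.inr.injEq, Fin.ext_iff]
  omega

/-- The neighbours of a wing form a clique. -/
theorem hGraphT_wing {m : ℕ} {t : Fin 3} {w : Fin 4} {a b : Fin m ⊕ Fin 4}
    (ha : (hGraphT m t).Adj (Sum.inr w) a) (hb : (hGraphT m t).Adj (Sum.inr w) b)
    (hab : a ≠ b) : (hGraphT m t).Adj a b := by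
  rcases a with i | v <;> rcases b with j | u <;>
    simp only [hGraphT_adj_bb, hGraphT_adj_bw, hGraphT_adj_wb, hGraphT_adj_ww, ne_eq,
      Sum.inl.injEq, Sum.inr.injEq, Fin.ext_iff] at * <;> omega

/-- A vertex with three distinct neighbours is an end of the body. -/
theorem hGraphT_end {m : ℕ} {t : Fin 3} {x a b c : Fin m ⊕ Fin 4}
    (ha : (hGraphT m t).Adj x a) (hb : (hGraphT m t).Adj x b) (hc : (hGraphT m t).Adj x c)
    (hab : a ≠ b) (hac : a ≠ c) (hbc : b ≠ c) :
    ∃ i : Fin m, x = Sum.inl i ∧ ((i : ℕ) = 0 ∨ (i : ℕ) + 1 = m) := by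
  rcases x with i | w
  · refine ⟨i, rfl, ?_⟩
    rcases a with a | a <;> rcases b with b | b <;> rcases c with c | c <;>
      simp only [hGraphT_adj_bb, hGraphT_adj_bw, ne_eq,
        Sum.inl.injEq, Sum.inr.injEq, Fin.ext_iff] at * <;> omega
  · exfalso
    rcases a with a | a <;> rcases b with b | b <;> rcases c with c | c <;>
      simp only [hGraphT_adj_wb, hGraphT_adj_ww, ne_eq,
        Sum.inl.injEq, Sum.inr.injEq, Fin.ext_iff] at * <;> omega

/-- If some vertex has four distinct neighbours, the body has length one. -/
theorem hGraphT_four {m : ℕ} {t : Fin 3} {x a b c d : Fin m ⊕ Fin 4}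
    (ha : (hGraphT m t).Adj x a) (hb : (hGraphT m t).Adj x b) (hc : (hGraphT m t).Adj x c)
    (hd : (hGraphT m t).Adj x d) (hab : a ≠ b) (hac : a ≠ c) (had : a ≠ d) (hbc : b ≠ c)
    (hbd : b ≠ d) (hcd : c ≠ d) : m = 1 := by
  obtain ⟨i, rfl, hi⟩ := hGraphT_end ha hb hc hab hac hbc
  rcases a with a | a <;> rcases b with b | b <;> rcases c with c | c <;> rcases d with d | d <;>
    simp only [hGraphT_adj_bb, hGraphT_adj_bw, ne_eq,
      Sum.inl.injEq, Sum.inr.injEq, Fin.ext_iff, reduceCtorEq, not_false_eq_true] at * <;> omega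

/-- Each end of the body has three distinct neighbours: its two wings, and either the body
neighbour or, for a body of length one, a wing of the other side. -/
theorem hGraphT_three_nbr {m : ℕ} {t : Fin 3} (i : Fin m) (hi : (i : ℕ) = 0 ∨ (i : ℕ) + 1 = m) :
    ∃ a b c, (hGraphT m t).Adj (Sum.inl i) a ∧ (hGraphT m t).Adj (Sum.inl i) b ∧
      (hGraphT m t).Adj (Sum.inl i) c ∧ a ≠ b ∧ a ≠ c ∧ b ≠ c := by
  by_cases h0 : (i : ℕ) = 0
  · by_cases hm : m = 1
    · refine ⟨Sum.inr 0, Sum.inr 1, Sum.inr 2, ?_⟩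
      simp [hGraphT_adj_bw, h0, hm]
    · refine ⟨Sum.inr 0, Sum.inr 1, Sum.inl ⟨1, by omega⟩, ?_⟩
      simp [hGraphT_adj_bw, hGraphT_adj_bb, h0]
  · have h1 : (i : ℕ) + 1 = m := by omega
    refine ⟨Sum.inr 2, Sum.inr 3, Sum.inl ⟨i - 1, by omega⟩, ?_⟩
    simp [hGraphT_adj_bw, hGraphT_adj_bb, h1]
    omega

/-! ### Leaves of H-graphs -/

/-- The vertices with at most one neighbour. -/
def leafSet {V : Type*} (G : SimpleGraph V) : Set V :=
  {x | ∀ a b, G.Adj x a → G.Adj x b → a = b}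

theorem hGraphT_leafSet {m : ℕ} (hm : 1 ≤ m) (t : Fin 3) :
    leafSet (hGraphT m t) =
      Sum.inr '' {w : Fin 4 | ((w : ℕ) < 2 → (t : ℕ) ≠ 2) ∧ (2 ≤ (w : ℕ) → (t : ℕ) = 0)} := by
  ext x
  rcases x with i | w
  · simp only [leafSet, Set.mem_ofPred_eq, Set.mem_image, reduceCtorEq, and_false, exists_false,
      iff_false]
    intro h
    by_cases hi : (i : ℕ) = 0 ∨ (i : ℕ) + 1 = m
    · obtain ⟨a, b, -, ha, hb, -, hab, -⟩ := hGraphT_three_nbr (t := t) i hi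
      exact hab (h _ _ ha hb)
    · have := h (Sum.inl ⟨i - 1, by omega⟩) (Sum.inl ⟨i + 1, by omega⟩)
        (hGraphT_adj_bb.2 (by simp; omega)) (hGraphT_adj_bb.2 (by simp))
      simp at this
  · simp only [leafSet, Set.mem_ofPred_eq, Set.mem_image, Sum.inr.injEq, exists_eq_right]
    constructor
    · intro h
      constructor
      · intro hw ht
        have := h (Sum.inl ⟨0, by omega⟩) (Sum.inr ⟨1 - w, by omega⟩)
          (hGraphT_adj_wb.2 (by simp; omega)) (hGraphT_adj_ww.2 (by simp; omega))
        simp at this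
      · intro hw
        by_contra ht
        have := h (Sum.inl ⟨m - 1, by omega⟩) (Sum.inr ⟨5 - w, by omega⟩)
          (hGraphT_adj_wb.2 (by simp; omega)) (hGraphT_adj_ww.2 (by simp; omega))
        simp at this
    · intro h a b ha hb
      rcases a with a | a <;> rcases b with b | b <;>
        simp only [hGraphT_adj_wb, hGraphT_adj_ww, reduceCtorEq,
          Sum.inl.injEq, Sum.inr.injEq, Fin.ext_iff] at * <;> omega

theorem hGraphT_ncard_leaf {m : ℕ} (hm : 1 ≤ m) (t : Fin 3) :
    (leafSet (hGraphT m t)).ncard = 4 - 2 * (t : ℕ) := by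
  rw [hGraphT_leafSet hm, Set.ncard_image_of_injective _ Sum.inr_injective,
    Set.ncard_eq_toFinset_card']
  simp only [Set.toFinset_ofPred]
  revert t
  decide

/-- A surjective embedding preserves the number of leaves. -/
theorem leafSet_ncard_eq {V W : Type*} {G : SimpleGraph V} {H : SimpleGraph W} (f : G ↪g H)
    (hf : Function.Surjective f) : (leafSet G).ncard = (leafSet H).ncard := by
  rw [← Set.ncard_image_of_injective _ f.injective]
  congr 1
  ext y
  obtain ⟨x, rfl⟩ := hf y
  simp only [leafSet, Set.mem_image, f.injective.eq_iff, exists_eq_right, Set.mem_ofPred_eq,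
    hf.forall, f.map_adj_iff]

/-! ### Embeddings of H-graphs -/

/-- The position of a vertex along the body; a wing is placed at its end of the body. -/
def hPos (m : ℕ) : Fin m ⊕ Fin 4 → ℤ
  | Sum.inl i => i
  | Sum.inr w => if (w : ℕ) < 2 then 0 else m - 1

theorem hPos_adj {m : ℕ} {t : Fin 3} {x y : Fin m ⊕ Fin 4} (h : (hGraphT m t).Adj x y) :
    |hPos m x - hPos m y| ≤ 1 := by
  rw [abs_le]
  rcases x with i | w <;> rcases y with j | v <;>
    simp only [hGraphT_adj_bb, hGraphT_adj_bw, hGraphT_adj_wb, hGraphT_adj_ww, hPos] at * <;> grind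

theorem hGraphT_hGraphT {m m' : ℕ} {t t' : Fin 3} (hm : 1 ≤ m)
    (f : hGraphT m t ↪g hGraphT m' t') : m = m' ∧ t = t' := by
  have hle : m ≤ m' := by
    simpa using Fintype.card_le_of_injective f f.injective
  have heq : m = m' := by
    by_contra hne
    by_cases h1 : m = 1
    · have hadj : ∀ w : Fin 4, (hGraphT m' t').Adj (f (Sum.inl ⟨0, hm⟩)) (f (Sum.inr w)) := by
        intro w
        rw [f.map_adj_iff, hGraphT_adj_bw]
        by_cases hw : (w : ℕ) < 2
        · exact Or.inl ⟨hw, rfl⟩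
        · exact Or.inr ⟨by omega, by change 0 + 1 = m; omega⟩
      have hw : ∀ v w : Fin 4, v ≠ w → f (Sum.inr v) ≠ f (Sum.inr w) := fun v w h =>
        f.injective.ne (Sum.inr_injective.ne h)
      have := hGraphT_four (hadj 0) (hadj 1) (hadj 2) (hadj 3) (hw _ _ (by decide))
        (hw _ _ (by decide)) (hw _ _ (by decide)) (hw _ _ (by decide)) (hw _ _ (by decide))
        (hw _ _ (by decide))
      omega
    · have hends : ∀ i : Fin m, ((i : ℕ) = 0 ∨ (i : ℕ) + 1 = m) →
          ∃ j : Fin m', f (Sum.inl i) = Sum.inl j ∧ ((j : ℕ) = 0 ∨ (j : ℕ) + 1 = m') := by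
        intro i hi
        obtain ⟨a, b, c, ha, hb, hc, hab, hac, hbc⟩ := hGraphT_three_nbr (t := t) i hi
        exact hGraphT_end (f.map_adj_iff.2 ha) (f.map_adj_iff.2 hb) (f.map_adj_iff.2 hc)
          (f.injective.ne hab) (f.injective.ne hac) (f.injective.ne hbc)
      obtain ⟨j, hj, hj'⟩ := hends ⟨0, hm⟩ (Or.inl rfl)
      obtain ⟨k, hk, hk'⟩ := hends ⟨m - 1, by omega⟩ (Or.inr (by simp; omega))
      have hjk : (j : ℕ) ≠ k := by
        intro h
        have := f.injective (hj.trans ((congrArg Sum.inl (Fin.ext h)).trans hk.symm))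
        simp at this
        omega
      have hwalk : ∀ (d : ℕ) (hd : d < m),
          |hPos m' (f (Sum.inl ⟨0, hm⟩)) - hPos m' (f (Sum.inl ⟨d, hd⟩))| ≤ d := by
        intro d
        induction d with
        | zero => intro hd; simp
        | succ d ih =>
          intro hd
          have h1 := ih (by omega)
          have h2 := hPos_adj (f.map_adj_iff.2 (hGraphT_adj_bb (t := t)
            (i := ⟨d, by omega⟩) (j := ⟨d + 1, hd⟩) |>.2 (Or.inl rfl)))
          rw [abs_le] at *
          push_cast
          constructor <;> linarith [h1.1, h1.2, h2.1, h2.2]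
      have := hwalk (m - 1) (by omega)
      rw [hj, hk, abs_le] at this
      simp only [hPos] at this
      omega
  refine ⟨heq, ?_⟩
  subst heq
  have h := leafSet_ncard_eq f (Finite.surjective_of_injective f.injective)
  rw [hGraphT_ncard_leaf hm, hGraphT_ncard_leaf hm] at h
  apply Fin.ext
  omega

/-! ### Holes against H-graphs -/

theorem cycle_hGraphT {n m : ℕ} {t : Fin 3} (hn : 4 ≤ n) (f : cycleGraph n ↪g hGraphT m t) :
    False := by
  have hbody : ∀ x, ∃ i : Fin m, f x = Sum.inl i := by
    intro x
    rcases hx : f x with i | w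
    · exact ⟨i, rfl⟩
    · obtain ⟨a, b, -, ha, hb, hab, hnadj⟩ := cycleGraph_two_nbr hn x
      rw [← f.map_adj_iff, hx] at ha hb
      exact absurd (f.map_adj_iff.1 (hGraphT_wing ha hb (f.injective.ne hab))) hnadj
  choose g hg using hbody
  have : Nonempty (Fin n) := ⟨⟨0, by omega⟩⟩
  obtain ⟨x, hx⟩ := Finite.exists_min g
  obtain ⟨a, b, -, ha, hb, hab, -⟩ := cycleGraph_two_nbr hn x
  rw [← f.map_adj_iff, hg, hg, hGraphT_adj_bb] at ha hb
  have h1 := hx a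
  have h2 := hx b
  rw [Fin.le_def] at h1 h2
  -- both neighbours of the lowest vertex lie one step above it, so they coincide
  have : g a = g b := Fin.ext (by omega)
  exact hab (f.injective (by rw [hg, hg, this]))

theorem hGraphT_cycle {n m : ℕ} {t : Fin 3} (hm : 1 ≤ m) (f : hGraphT m t ↪g cycleGraph n) :
    False := by
  obtain ⟨a, b, c, ha, hb, hc, hab, hac, hbc⟩ :=
    hGraphT_three_nbr (t := t) (⟨0, hm⟩ : Fin m) (Or.inl rfl)
  rcases cycleGraph_nbr (f.map_adj_iff.2 ha) (f.map_adj_iff.2 hb) (f.map_adj_iff.2 hc)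
    (f.injective.ne hab) with h | h
  · exact hac (f.injective h).symm
  · exact hbc (f.injective h).symm

/-- The canonical graphs form an antichain under the induced subgraph relation:
no hole embeds into a larger or smaller hole, no H-graph (plain, semi-tight or
tight, with body of length `≥ 1`) embeds into a different H-graph, and no hole
embeds into an H-graph or vice versa. -/
theorem stmt_4 :
    (∀ n m : ℕ, 4 ≤ n → n < m →
      IsEmpty (cycleGraph n ↪g cycleGraph m) ∧ IsEmpty (cycleGraph m ↪g cycleGraph n)) ∧
    (∀ (m m' : ℕ) (t t' : Fin 3), 1 ≤ m → 1 ≤ m' → ¬(m = m' ∧ t = t') →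
      IsEmpty (hGraphT m t ↪g hGraphT m' t')) ∧
    (∀ (n m : ℕ) (t : Fin 3), 4 ≤ n → 1 ≤ m →
      IsEmpty (cycleGraph n ↪g hGraphT m t) ∧ IsEmpty (hGraphT m t ↪g cycleGraph n)) := by
  refine ⟨fun n m hn hnm => ⟨⟨fun f => ?_⟩, ⟨fun f => ?_⟩⟩, fun m m' t t' hm _ hne => ⟨fun f => ?_⟩,
    fun n m t hn hm => ⟨⟨fun f => ?_⟩, ⟨fun f => ?_⟩⟩⟩
  · exact hnm.ne (cycle_cycle hn (by omega) f)
  · exact hnm.ne' (cycle_cycle (by omega) hn f)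
  · exact hne (hGraphT_hGraphT hm f)
  · exact cycle_hGraphT hn f
  · exact hGraphT_cycle hm f
end

section
/- Let G be a graph containing an H-graph H* (plain, semi-tight, or tight) as a subgraph whose body is an induced (chordless) path of G, and let s ≥ 2 be an integer. Then either (1) G contains a path of length t with 2 ≤ t ≤ s+1 connecting a left wing of H* to a right wing of H* all of whose intermediate vertices lie in the body of H*, or (2) G contains a canonical graph of order at least s as an induced subgraph. -/
/-!
Index the body as `B 0, …, B (m - 1)`, and let `U`, `V` be the sets of left and right wings.
A body neighbour `B i` of a left wing and a body neighbour `B j` of a right wing give a path of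
length `|i - j| + 2` through the body (`exists_path_through_body`), so if the first alternative
fails, then always `|i - j| ≥ s`.

Choose `i` and `d` with `B i` adjacent to a left wing, `B (i + d)` adjacent to a right wing and `d`
minimal. Then `d ≥ s`, and by minimality no wing is adjacent to a vertex strictly between the two
ends of the segment `B i, …, B (i + d)`; also no left wing is adjacent to `B (i + d)` and no right
wing to `B i`. If a left wing at `B i` is adjacent to a right wing at `B (i + d)`, they close the
segment to a hole of length `d + 3` (`containsInd_cycleGraph`). Otherwise the segment is the body of
an induced H-graph (`exists_containsInd_hGraphT`): its left wings are the two original ones when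
`i = 0`, and otherwise a left wing together with the preceding body vertex `B (i - 1)`; the right
wings are found in the same way. The vertex `B (i - 1)` has no right wing as a neighbour
because it is too close to `B i`. These steps are combined in
`containsCanonical_of_far`.
-/

open SimpleGraph

/-! ### Induced holes and H-graphs from explicit vertices -/

lemma containsInd_of_map {α β : Type*} {H : SimpleGraph α} {G : SimpleGraph β} (F : α → β)
    (hF : ∀ x y, F x = F y → x = y) (hadj : ∀ x y, G.Adj (F x) (F y) ↔ H.Adj x y) :
    ContainsInd H G :=
  ⟨⟨⟨F, fun x y => hF x y⟩, fun {x y} => hadj x y⟩⟩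

/-- A chordless path `q 0, …, q d` closed up by an edge `c a`, where `a` sees only `q 0` and
`c` sees only `q d`, is a hole of length `d + 3`. -/
lemma containsInd_cycleGraph {β : Type*} (G : SimpleGraph β) (d : ℕ) (q : ℕ → β) (a c : β)
    (hinj : ∀ i j, i ≤ d → j ≤ d → q i = q j → i = j)
    (hq : ∀ i j, i ≤ d → j ≤ d → (G.Adj (q i) (q j) ↔ i + 1 = j ∨ j + 1 = i))
    (ha : ∀ i, i ≤ d → (G.Adj a (q i) ↔ i = 0)) (hc : ∀ i, i ≤ d → (G.Adj c (q i) ↔ i = d))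
    (ha' : ∀ i, i ≤ d → a ≠ q i) (hc' : ∀ i, i ≤ d → c ≠ q i) (hac : G.Adj a c) :
    ContainsInd (cycleGraph (d + 3)) G := by
  have hne := hac.ne
  refine containsInd_of_map
    (fun k => if (k : ℕ) ≤ d then q k else if (k : ℕ) = d + 1 then c else a) ?_ ?_
  · intro x y hxy
    have hx := x.2
    have hy := y.2
    apply Fin.ext
    split_ifs at hxy <;> grind
  · intro x y
    have hx := x.2
    have hy := y.2
    -- Adjacency in the cycle, with the cyclic subtraction of `Fin` unfolded.
    have key : (cycleGraph (d + 3)).Adj x y ↔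
        ((x : ℕ) + 1 = y ∨ (y : ℕ) + 1 = x ∨ ((x : ℕ) = 0 ∧ (y : ℕ) = d + 2) ∨
          ((y : ℕ) = 0 ∧ (x : ℕ) = d + 2)) := by
      rw [cycleGraph_adj']
      rcases lt_trichotomy x y with h | h | h
      · rw [Fin.sub_val_of_le h.le, Fin.coe_sub_iff_lt.2 h]
        omega
      · subst h
        rw [Fin.sub_val_of_le le_rfl]
        omega
      · rw [Fin.sub_val_of_le h.le, Fin.coe_sub_iff_lt.2 h]
        omega
    rw [key]
    have hca := hac.symm
    split_ifs with h1 h2 h3 h3 h4 h5 h6 <;>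
      grind [SimpleGraph.adj_comm, SimpleGraph.irrefl]

/-- A chordless path `q 0, …, q (n - 1)` with left wings `a, b` and right wings `c, e`, without
further edges except possibly `a b` and `c e`, is an induced H-graph whose two optional edges are
present exactly when they are edges of `G`. -/
lemma containsInd_hGraph {β : Type*} (G : SimpleGraph β) (n : ℕ) (q : ℕ → β) (a b c e : β)
    (hinj : ∀ i j, i < n → j < n → q i = q j → i = j)
    (hq : ∀ i j, i < n → j < n → (G.Adj (q i) (q j) ↔ i + 1 = j ∨ j + 1 = i))
    (hL : ∀ x, x = a ∨ x = b → ∀ i, i < n → x ≠ q i ∧ (G.Adj x (q i) ↔ i = 0))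
    (hR : ∀ x, x = c ∨ x = e → ∀ i, i < n → x ≠ q i ∧ (G.Adj x (q i) ↔ i + 1 = n))
    (hab : a ≠ b) (hce : c ≠ e)
    (hLR : ∀ x y, x = a ∨ x = b → y = c ∨ y = e → x ≠ y ∧ ¬ G.Adj x y) :
    ContainsInd (hGraph n (G.Adj a b) (G.Adj c e)) G := by
  have h1 := hL a (.inl rfl)
  have h2 := hL b (.inr rfl)
  have h3 := hR c (.inl rfl)
  have h4 := hR e (.inr rfl)
  have h5 := hLR a c (.inl rfl) (.inl rfl)
  have h6 := hLR a e (.inl rfl) (.inr rfl)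
  have h7 := hLR b c (.inr rfl) (.inl rfl)
  have h8 := hLR b e (.inr rfl) (.inr rfl)
  clear hL hR hLR
  refine containsInd_of_map (Sum.elim (fun i => q i) ![a, b, c, e]) ?_ ?_
  · rintro (i | w) (j | w') hxy
    · exact congrArg _ (Fin.ext (hinj _ _ i.2 j.2 hxy))
    · have hi := i.2
      fin_cases w' <;> simp at hxy <;> grind
    · have hj := j.2
      fin_cases w <;> simp at hxy <;> grind
    · fin_cases w <;> fin_cases w' <;> simp at hxy ⊢ <;> grind
  · rintro (i | w) (j | w')
    · have := hq i j i.2 j.2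
      have hi := i.2
      have hj := j.2
      simp [hGraph, SimpleGraph.fromRel_adj]
      grind
    · have hi := i.2
      fin_cases w' <;> simp [hGraph, SimpleGraph.fromRel_adj] <;>
        grind [SimpleGraph.adj_comm]
    · have hj := j.2
      fin_cases w <;> simp [hGraph, SimpleGraph.fromRel_adj] <;>
        grind [SimpleGraph.adj_comm]
    · fin_cases w <;> fin_cases w' <;> simp [hGraph, SimpleGraph.fromRel_adj] <;>
        grind [SimpleGraph.adj_comm]

/-- Under the hypotheses of `containsInd_hGraph`, one of the three types of H-graph occurs: if only
the left wings are adjacent, reversing the body gives a semi-tight H-graph. -/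
lemma exists_containsInd_hGraphT {β : Type*} (G : SimpleGraph β) (n : ℕ) (q : ℕ → β) (a b c e : β)
    (hinj : ∀ i j, i < n → j < n → q i = q j → i = j)
    (hq : ∀ i j, i < n → j < n → (G.Adj (q i) (q j) ↔ i + 1 = j ∨ j + 1 = i))
    (hL : ∀ x, x = a ∨ x = b → ∀ i, i < n → x ≠ q i ∧ (G.Adj x (q i) ↔ i = 0))
    (hR : ∀ x, x = c ∨ x = e → ∀ i, i < n → x ≠ q i ∧ (G.Adj x (q i) ↔ i + 1 = n))
    (hab : a ≠ b) (hce : c ≠ e)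
    (hLR : ∀ x y, x = a ∨ x = b → y = c ∨ y = e → x ≠ y ∧ ¬ G.Adj x y) :
    ∃ t : Fin 3, ContainsInd (hGraphT n t) G := by
  have h := containsInd_hGraph G n q a b c e hinj hq hL hR hab hce hLR
  by_cases h1 : G.Adj a b
  · by_cases h2 : G.Adj c e
    · exact ⟨2, by simpa [hGraphT, h1, h2] using h⟩
    · have h' := containsInd_hGraph G n (fun i => q (n - 1 - i)) c e a b
        (fun i j hi hj hij => by
          have := hinj _ _ (by omega) (by omega) hij
          omega)
        (fun i j hi hj => by
          rw [hq _ _ (by omega) (by omega)]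
          omega)
        (fun x hx i hi => by
          refine ⟨(hR x hx _ (by omega)).1, ?_⟩
          rw [(hR x hx _ (by omega)).2]
          omega)
        (fun x hx i hi => by
          refine ⟨(hL x hx _ (by omega)).1, ?_⟩
          rw [(hL x hx _ (by omega)).2]
          omega)
        hce hab
        (fun x y hx hy => ⟨(hLR y x hy hx).1.symm, fun hxy => (hLR y x hy hx).2 hxy.symm⟩)
      exact ⟨1, by simpa [hGraphT, h1, h2] using h'⟩
  · by_cases h2 : G.Adj c e
    · exact ⟨1, by simpa [hGraphT, h1, h2] using h⟩
    · exact ⟨0, by simpa [hGraphT, h1, h2] using h⟩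

/-! ### Paths through the body -/

/-- The subpath of the body from `B i` to `B (i + k)`. -/
lemma exists_body_path {β : Type*} (G : SimpleGraph β) (m : ℕ) (B : ℕ → β)
    (hinj : ∀ i j, i < m → j < m → B i = B j → i = j)
    (hB : ∀ i, i + 1 < m → G.Adj (B i) (B (i + 1))) (i k : ℕ) (hk : i + k < m) :
    ∃ p : G.Walk (B i) (B (i + k)), p.IsPath ∧ p.length = k ∧
      ∀ x ∈ p.support, ∃ l, i ≤ l ∧ l ≤ i + k ∧ x = B l := by
  induction k with
  | zero => exact ⟨.nil, by simp, by simp, by simp; exact ⟨i, le_rfl, le_rfl, rfl⟩⟩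
  | succ k ih =>
    obtain ⟨p, hp, hl, hs⟩ := ih (by omega)
    refine ⟨p.concat (hB (i + k) (by omega)), ?_, by simp [hl], ?_⟩
    · refine hp.concat (fun hmem => ?_) _
      obtain ⟨l, h1, h2, h3⟩ := hs _ hmem
      have := hinj _ _ (by omega) (by omega) h3
      omega
    · intro x hx
      rw [SimpleGraph.Walk.support_concat] at hx
      simp only [List.mem_append, List.mem_singleton] at hx
      rcases hx with hx | rfl
      · obtain ⟨l, h1, h2, h3⟩ := hs _ hx
        exact ⟨l, h1, by omega, h3⟩
      · exact ⟨i + k + 1, by omega, by omega, rfl⟩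

/-- Two vertices outside the body with body neighbours `B i` and `B (i + k)` are joined by a path
of length `k + 2` through the body. -/
lemma exists_path_through_body {β : Type*} (G : SimpleGraph β) (m : ℕ) (B : ℕ → β)
    (hinj : ∀ i j, i < m → j < m → B i = B j → i = j)
    (hB : ∀ i, i + 1 < m → G.Adj (B i) (B (i + 1))) (x y : β) (hxy : x ≠ y)
    (hx : ∀ i, i < m → x ≠ B i) (hy : ∀ i, i < m → y ≠ B i) (i k : ℕ) (hk : i + k < m)
    (hxi : G.Adj x (B i)) (hyk : G.Adj y (B (i + k))) :
    ∃ p : G.Walk x y, p.IsPath ∧ p.length = k + 2 ∧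
      ∀ z ∈ p.support, z ≠ x → z ≠ y → ∃ l, l < m ∧ z = B l := by
  obtain ⟨p, hp, hl, hs⟩ := exists_body_path G m B hinj hB i k hk
  have hxp : x ∉ p.support := fun hmem => by
    obtain ⟨l, h1, h2, h3⟩ := hs _ hmem
    exact hx l (by omega) h3
  have hyp : y ∉ p.support := fun hmem => by
    obtain ⟨l, h1, h2, h3⟩ := hs _ hmem
    exact hy l (by omega) h3
  have hq : (SimpleGraph.Walk.cons hxi p).IsPath := hp.cons hxp
  refine ⟨(SimpleGraph.Walk.cons hxi p).concat hyk.symm, hq.concat ?_ _, by simp [hl], ?_⟩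
  · simp only [SimpleGraph.Walk.support_cons, List.mem_cons, not_or]
    exact ⟨hxy.symm, hyp⟩
  · intro z hz hzx hzy
    rw [SimpleGraph.Walk.support_concat] at hz
    simp only [SimpleGraph.Walk.support_cons, List.mem_append,
      List.mem_cons, List.not_mem_nil, or_false] at hz
    rcases hz with (hz | hz) | hz
    · exact absurd hz hzx
    · obtain ⟨l, h1, h2, h3⟩ := hs _ hz
      exact ⟨l, by omega, h3⟩
    · exact absurd hz hzy

/-! ### The closest pair of wing neighbours -/

/-- If body neighbours of left wings (`U`) and of right wings (`V`) are always at distance at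
least `s ≥ 2` along the body, then there is a large induced canonical graph. -/
lemma containsCanonical_of_far {β : Type*} (G : SimpleGraph β) (m s : ℕ) (hm : 1 ≤ m) (hs : 2 ≤ s)
    (B : ℕ → β) (U V : Set β)
    (hinj : ∀ i j, i < m → j < m → B i = B j → i = j)
    (hB : ∀ i j, i < m → j < m → (G.Adj (B i) (B j) ↔ i + 1 = j ∨ j + 1 = i))
    (hUB : ∀ x ∈ U, ∀ i, i < m → x ≠ B i) (hVB : ∀ x ∈ V, ∀ i, i < m → x ≠ B i)
    (hUV : ∀ x ∈ U, ∀ y ∈ V, x ≠ y)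
    (hU : ∃ a ∈ U, ∃ b ∈ U, a ≠ b ∧ G.Adj a (B 0) ∧ G.Adj b (B 0))
    (hV : ∃ a ∈ V, ∃ b ∈ V, a ≠ b ∧ G.Adj a (B (m - 1)) ∧ G.Adj b (B (m - 1)))
    (hfar : ∀ x ∈ U, ∀ y ∈ V, ∀ i j, i < m → j < m → G.Adj x (B i) → G.Adj y (B j) →
      i + s ≤ j ∨ j + s ≤ i) :
    ContainsCanonical G s := by
  classical
  have hex : ∃ d i, i + d < m ∧ (∃ x ∈ U, G.Adj x (B i)) ∧ ∃ y ∈ V, G.Adj y (B (i + d)) := by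
    obtain ⟨a, ha, -, -, -, h, -⟩ := hU
    obtain ⟨c, hc, -, -, -, h', -⟩ := hV
    exact ⟨m - 1, 0, by omega, ⟨a, ha, h⟩, c, hc, by simpa using h'⟩
  obtain ⟨d, hdef⟩ : ∃ d, d = Nat.find hex := ⟨_, rfl⟩
  have hd := Nat.find_spec hex
  have hmin := fun d' => Nat.find_min hex (m := d')
  rw [← hdef] at hd hmin
  obtain ⟨i, him, ⟨u, huU, hui⟩, v, hvV, hvi⟩ := hd
  have hds : s ≤ d := by
    have := hfar u huU v hvV i (i + d) (by omega) him hui hvi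
    omega
  have hUint : ∀ x ∈ U, ∀ k, k ≤ d → G.Adj x (B (i + k)) → k = 0 := by
    intro x hx k hk hadj
    by_contra hk0
    rcases hk.eq_or_lt with rfl | hlt
    · have := hfar x hx v hvV _ _ him him hadj hvi
      omega
    · refine hmin (d - k) (by omega) ⟨i + k, by omega, ⟨x, hx, hadj⟩, v, hvV, ?_⟩
      rwa [show i + k + (d - k) = i + d by omega]
  have hVint : ∀ y ∈ V, ∀ k, k ≤ d → G.Adj y (B (i + k)) → k = d := by
    intro y hy k hk hadj
    by_contra hkd
    exact hmin k (by omega) ⟨i, by omega, ⟨u, huU, hui⟩, y, hy, hadj⟩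
  by_cases hedge : ∃ x ∈ U, ∃ y ∈ V, G.Adj x (B i) ∧ G.Adj y (B (i + d)) ∧ G.Adj x y
  · obtain ⟨x, hx, y, hy, hxi, hyi, hxy⟩ := hedge
    refine Or.inl ⟨d + 3, by omega, by omega,
      containsInd_cycleGraph G d (fun k => B (i + k)) x y ?_ ?_ ?_ ?_ ?_ ?_ hxy⟩
    · intro k l hk hl h
      have := hinj _ _ (by omega) (by omega) h
      omega
    · intro k l hk hl
      rw [hB _ _ (by omega) (by omega)]
      omega
    · exact fun k hk => ⟨hUint x hx k hk, fun h => by subst h; exact hxi⟩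
    · exact fun k hk => ⟨hVint y hy k hk, fun h => by subst h; exact hyi⟩
    · exact fun k hk => hUB x hx _ (by omega)
    · exact fun k hk => hVB y hy _ (by omega)
  -- `X` and `Y` describe the vertices usable as left and right wings of the segment.
  let X : β → Prop := fun x => (x ∈ U ∧ G.Adj x (B i)) ∨ ∃ k, k + 1 = i ∧ x = B k
  let Y : β → Prop := fun y => (y ∈ V ∧ G.Adj y (B (i + d))) ∨ (i + d + 1 < m ∧ y = B (i + d + 1))
  obtain ⟨a, b, hab, hXa, hXb⟩ : ∃ a b, a ≠ b ∧ X a ∧ X b := by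
    rcases Nat.eq_zero_or_pos i with h0 | h0
    · obtain ⟨a', ha', b', hb', hne, h1, h2⟩ := hU
      exact ⟨a', b', hne, Or.inl ⟨ha', by rwa [h0]⟩, Or.inl ⟨hb', by rwa [h0]⟩⟩
    · exact ⟨u, B (i - 1), hUB u huU _ (by omega), Or.inl ⟨huU, hui⟩,
        Or.inr ⟨i - 1, by omega, rfl⟩⟩
  obtain ⟨c, e, hce, hYc, hYe⟩ : ∃ c e, c ≠ e ∧ Y c ∧ Y e := by
    by_cases h0 : i + d + 1 < m
    · exact ⟨v, B (i + d + 1), hVB v hvV _ h0, Or.inl ⟨hvV, hvi⟩, Or.inr ⟨h0, rfl⟩⟩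
    · obtain ⟨c', hc', e', he', hne, h1, h2⟩ := hV
      have h : m - 1 = i + d := by omega
      rw [h] at h1 h2
      exact ⟨c', e', hne, Or.inl ⟨hc', h1⟩, Or.inl ⟨he', h2⟩⟩
  have hX : ∀ x, X x → ∀ k, k < d + 1 → x ≠ B (i + k) ∧ (G.Adj x (B (i + k)) ↔ k = 0) := by
    rintro x (⟨hx, hxi⟩ | ⟨l, hl, rfl⟩) k hk
    · exact ⟨hUB x hx _ (by omega), hUint x hx k (by omega), fun h => by subst h; exact hxi⟩
    · refine ⟨fun h => ?_, ?_⟩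
      · have := hinj _ _ (by omega) (by omega) h
        omega
      · rw [hB _ _ (by omega) (by omega)]
        omega
  have hY : ∀ y, Y y → ∀ k, k < d + 1 → y ≠ B (i + k) ∧ (G.Adj y (B (i + k)) ↔ k + 1 = d + 1) := by
    rintro y (⟨hy, hyi⟩ | ⟨hl, rfl⟩) k hk
    · refine ⟨hVB y hy _ (by omega), fun h => ?_, fun h => ?_⟩
      · have := hVint y hy k (by omega) h
        omega
      · obtain rfl : k = d := by omega
        exact hyi
    · refine ⟨fun h => ?_, ?_⟩
      · have := hinj _ _ (by omega) (by omega) h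
        omega
      · rw [hB _ _ (by omega) (by omega)]
        omega
  have hXY : ∀ x y, X x → Y y → x ≠ y ∧ ¬ G.Adj x y := by
    rintro x y (⟨hx, hxi⟩ | ⟨l, hl, rfl⟩) (⟨hy, hyi⟩ | ⟨hl', rfl⟩)
    · exact ⟨hUV x hx y hy, fun h => hedge ⟨x, hx, y, hy, hxi, hyi, h⟩⟩
    · refine ⟨hUB x hx _ hl', fun h => ?_⟩
      -- `B (i + d + 1)` is next to the right-wing neighbour `B (i + d)`.
      have := hfar x hx v hvV _ _ hl' him h hvi
      omega
    · refine ⟨(hVB y hy _ (by omega)).symm, fun h => ?_⟩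
      -- `B (i - 1)` is next to the left-wing neighbour `B i`.
      have := hfar u huU y hy i l (by omega) (by omega) hui h.symm
      omega
    · refine ⟨fun h => ?_, ?_⟩
      · have := hinj _ _ (by omega) (by omega) h
        omega
      · rw [hB _ _ (by omega) (by omega)]
        omega
  refine Or.inr ⟨d + 1, by omega, by omega,
    exists_containsInd_hGraphT G (d + 1) (fun k => B (i + k)) a b c e ?_ ?_ ?_ ?_ hab hce ?_⟩
  · intro k l hk hl h
    have := hinj _ _ (by omega) (by omega) h
    omega
  · intro k l hk hl
    rw [hB _ _ (by omega) (by omega)]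
    omega
  · rintro x (rfl | rfl)
    exacts [hX _ hXa, hX _ hXb]
  · rintro x (rfl | rfl)
    exacts [hY _ hYc, hY _ hYe]
  · rintro x y (rfl | rfl) (rfl | rfl)
    exacts [hXY _ _ hXa hYc, hXY _ _ hXa hYe, hXY _ _ hXb hYc, hXY _ _ hXb hYe]

/-! ### The dichotomy -/

/-- If `G` contains an H-graph (plain, semi-tight or tight) as a subgraph whose
body is induced (chordless) in `G`, and `s ≥ 2`, then either `G` has a path of
length `t`, `2 ≤ t ≤ s + 1`, connecting a left wing to a right wing with all
intermediate vertices lying in the body, or `G` contains a canonical graph of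
order at least `s` as an induced subgraph. -/
theorem stmt_5 (β : Type) [Fintype β] (G : SimpleGraph β) (m s : ℕ) (t : Fin 3)
    (hm : 1 ≤ m) (hs : 2 ≤ s)
    (f : hGraphT m t →g G) (hinj : Function.Injective f)
    (hbody : ∀ i j : Fin m, G.Adj (f (Sum.inl i)) (f (Sum.inl j)) →
      (hGraphT m t).Adj (Sum.inl i) (Sum.inl j)) :
    (∃ w w' : Fin 4, (w : ℕ) < 2 ∧ 2 ≤ (w' : ℕ) ∧
      ∃ p : G.Walk (f (Sum.inr w)) (f (Sum.inr w')), p.IsPath ∧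
        2 ≤ p.length ∧ p.length ≤ s + 1 ∧
        ∀ x ∈ p.support, x ≠ f (Sum.inr w) → x ≠ f (Sum.inr w') →
          ∃ i : Fin m, x = f (Sum.inl i)) ∨
    ContainsCanonical G s := by
  by_contra hcon
  rw [not_or] at hcon
  obtain ⟨hno, hcan⟩ := hcon
  -- The body indexed by `ℕ`; the value `f (Sum.inr 0)` beyond `m` is never used.
  let B : ℕ → β := fun i => if h : i < m then f (Sum.inl ⟨i, h⟩) else f (Sum.inr 0)
  have hBv : ∀ i (h : i < m), B i = f (Sum.inl ⟨i, h⟩) := fun i h => dif_pos h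
  have hBinj : ∀ i j, i < m → j < m → B i = B j → i = j := by
    intro i j hi hj h
    rw [hBv i hi, hBv j hj] at h
    simpa using hinj h
  have hB : ∀ i j, i < m → j < m → (G.Adj (B i) (B j) ↔ i + 1 = j ∨ j + 1 = i) := by
    intro i j hi hj
    rw [hBv i hi, hBv j hj]
    have key : (hGraphT m t).Adj (Sum.inl ⟨i, hi⟩) (Sum.inl ⟨j, hj⟩) ↔
        i + 1 = j ∨ j + 1 = i := by
      simp [hGraphT, hGraph, SimpleGraph.fromRel_adj]
      omega
    rw [← key]
    exact ⟨hbody _ _, fun h => f.map_adj h⟩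
  have hWB : ∀ w : Fin 4, ∀ i, i < m → f (Sum.inr w) ≠ B i := by
    intro w i hi h
    rw [hBv i hi] at h
    simpa using hinj h
  have hWW : ∀ w w' : Fin 4, w ≠ w' → f (Sum.inr w) ≠ f (Sum.inr w') :=
    fun w w' hne h => hne (by simpa using hinj h)
  have hleft : ∀ w : Fin 4, (w : ℕ) < 2 → G.Adj (f (Sum.inr w)) (B 0) := by
    intro w hw
    rw [hBv 0 (by omega)]
    apply f.map_adj
    simp [hGraphT, hGraph, SimpleGraph.fromRel_adj]
    omega
  have hright : ∀ w : Fin 4, 2 ≤ (w : ℕ) → G.Adj (f (Sum.inr w)) (B (m - 1)) := by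
    intro w hw
    rw [hBv (m - 1) (by omega)]
    apply f.map_adj
    simp [hGraphT, hGraph, SimpleGraph.fromRel_adj]
    omega
  have hB' : ∀ i, i + 1 < m → G.Adj (B i) (B (i + 1)) := fun i hi =>
    (hB i (i + 1) (by omega) hi).2 (Or.inl rfl)
  refine hcan (containsCanonical_of_far G m s hm hs B
    {x | ∃ w : Fin 4, (w : ℕ) < 2 ∧ x = f (Sum.inr w)}
    {x | ∃ w : Fin 4, 2 ≤ (w : ℕ) ∧ x = f (Sum.inr w)} hBinj hB ?_ ?_ ?_ ?_ ?_ ?_)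
  · rintro x ⟨w, -, rfl⟩
    exact hWB w
  · rintro x ⟨w, -, rfl⟩
    exact hWB w
  · rintro x ⟨w, hw, rfl⟩ y ⟨w', hw', rfl⟩
    exact hWW w w' (by rintro rfl; omega)
  · exact ⟨_, ⟨0, by simp, rfl⟩, _, ⟨1, by simp, rfl⟩, hWW 0 1 (by decide),
      hleft 0 (by simp), hleft 1 (by simp)⟩
  · exact ⟨_, ⟨2, by simp, rfl⟩, _, ⟨3, by simp, rfl⟩, hWW 2 3 (by decide),
      hright 2 (by simp), hright 3 (by simp)⟩
  · rintro x ⟨w, hw, rfl⟩ y ⟨w', hw', rfl⟩ i j hi hj hxi hyj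
    have hne : w ≠ w' := by rintro rfl; omega
    by_contra hfar
    apply hno
    rcases le_total i j with hij | hij
    · obtain ⟨k, rfl⟩ := Nat.exists_eq_add_of_le hij
      obtain ⟨p, hp, hl, hsup⟩ := exists_path_through_body G m B hBinj hB' _ _ (hWW w w' hne)
        (hWB w) (hWB w') i k hj hxi hyj
      refine ⟨w, w', hw, hw', p, hp, by omega, by omega, fun z hz h1 h2 => ?_⟩
      obtain ⟨l, hl, rfl⟩ := hsup z hz h1 h2
      exact ⟨⟨l, hl⟩, hBv l hl⟩
    · obtain ⟨k, rfl⟩ := Nat.exists_eq_add_of_le hij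
      obtain ⟨p, hp, hl, hsup⟩ := exists_path_through_body G m B hBinj hB' _ _ (hWW w w' hne).symm
        (hWB w') (hWB w) j k hi hyj hxi
      refine ⟨w, w', hw, hw', p.reverse, hp.reverse, by simp; omega, by simp; omega,
        fun z hz h1 h2 => ?_⟩
      obtain ⟨l, hl, rfl⟩ := hsup z (by simpa using hz) h2 h1
      exact ⟨⟨l, hl⟩, hBv l hl⟩
end
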